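/- arXiv:2109.03288 — 2 statements merged into one kernel-verified Lean document; each statement's English description precedes it below -/
import Mathlib

section
/- Let q be an odd prime and m a divisor of q−1. Then the limit lim_{x→∞} ( log x − ((q−1)/m)·∑_{n ≤ x, n^m ≡ 1 (mod q)} Λ(n)/n ) exists and equals γ + ∑_{χ ∈ X_m^*} (L'/L)(1, χ) + log q/(q−1), i.e. equals γ_{K_m} + log q/(q−1); here Λ denotes the von Mangoldt function. -/
open Filter Topology

/-- The Dirichlet L-function attached to a Dirichlet character mod `q` (junk value for `q = 0`). -/
noncomputable def Lfun {q : ℕ} (χ : DirichletCharacter ℂ q) (s : ℂ) : ℂ :=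
  if h : q = 0 then 0 else
    haveI : NeZero q := ⟨h⟩
    DirichletCharacter.LFunction χ s

/-- `γ_{K_m} = γ + ∑_{χ ∈ X_m^*} (L'/L)(1,χ)`, the Euler–Kronecker constant of the unique
subfield of `ℚ(ζ_q)` of degree `(q-1)/m`; here `X_m^*` is the set of nonprincipal Dirichlet
characters mod `q` that are trivial on the group `C_m` of `m`-th roots of unity mod `q`. -/
noncomputable def gammaK (q m : ℕ) : ℝ :=
  Real.eulerMascheroniConstant +
    (∑ᶠ χ ∈ {χ : DirichletCharacter ℂ q | χ ≠ 1 ∧ ∀ a : ZMod q, a ^ m = 1 → χ a = 1},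
      deriv (Lfun χ) 1 / Lfun χ 1).re

/-! For `a = Λ` restricted to a residue class mod `q`, the partial sums of `a n / n` are
`g T + ∫₀ᵀ g` at `T = log x`, where `g t = e⁻ᵗ ∑_{n ≤ eᵗ} a n`. The Laplace transform of `g` is
`L(1 + z) / (1 + z)`, with `L` the Dirichlet series of `a`; subtracting from `g` its expected limit
`A = 1 / φ(q)` removes the pole at `z = 0`, and nonvanishing of `L(s, χ)` on `Re s = 1` gives a
continuous extension to `Re z ≥ 0`. A Tauberian theorem of Newman type then shows that
`∫₀ᵀ (g - A)` converges to the value of the transform at `0`: the primitive is Lipschitz, smoothing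
it with a band-limited kernel leaves something that tends to `0` by the Riemann–Lebesgue lemma, and
the smoothing error is at most the Lipschitz constant times the first moment of the kernel, which
rescaling makes small. Since `eᵗ g t` increases, convergence of the integral forces `g → A`.

The limit for the class of a unit `u` is a combination of the values `(L'/L)(1, χ)` with weights
`χ(u)⁻¹`; summing over `u` in a subgroup `H` of the units, orthogonality keeps exactly the
characters trivial on `H`, and the principal character contributes `γ` together with the Euler
factors at the primes dividing `q`. The theorem is the case of the `m`-th roots of unity.
-/

section Laplace

open MeasureTheory Set
open scoped SchwartzMap FourierTransform NNReal Real

variable {E : Type*} [NormedAddCommGroup E] {M : ℝ≥0} {f W : ℝ → E} {T : ℝ}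

lemma norm_le_of_lipschitzOnWith_Ici (hW : LipschitzOnWith M W (Ici 0)) (hT : 0 ≤ T) :
    ‖W T‖ ≤ ‖W 0‖ + M * T := by
  have hdist := hW.norm_sub_le hT self_mem_Ici
  rw [sub_zero, Real.norm_of_nonneg hT] at hdist
  linarith [norm_le_insert' (W T) (W 0)]

lemma aestronglyMeasurable_of_lipschitzOnWith_Ici (hW : LipschitzOnWith M W (Ici 0)) :
    AEStronglyMeasurable W (volume.restrict (Ioi 0)) :=
  (hW.continuousOn.mono Ioi_subset_Ici_self).aestronglyMeasurable measurableSet_Ioi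

lemma norm_sub_indicator_le_of_lipschitzOnWith_Ici (hW : LipschitzOnWith M W (Ici 0))
    (hT : 0 < T) (t : ℝ) :
    ‖W T - (Ioi 0).indicator W t‖ ≤ (M + ‖W 0‖ / T) * ‖t - T‖ := by
  have hT0 : 0 ≤ ‖W 0‖ / T := by positivity
  by_cases ht : t ∈ Ioi (0 : ℝ)
  · rw [indicator_of_mem ht, norm_sub_rev]
    exact (hW.norm_sub_le (mem_Ici_of_Ioi ht) hT.le).trans (by gcongr; linarith)
  · rw [indicator_of_notMem ht, sub_zero]
    have htT : T ≤ ‖t - T‖ := by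
      rw [norm_sub_rev]
      exact le_trans (by linarith [notMem_Ioi.1 ht]) (Real.le_norm_self _)
    calc ‖W T‖ ≤ ‖W 0‖ + M * T := norm_le_of_lipschitzOnWith_Ici hW hT.le
      _ = (M + ‖W 0‖ / T) * T := by field_simp; ring
      _ ≤ (M + ‖W 0‖ / T) * ‖t - T‖ := by gcongr

lemma intervalIntegrable_of_norm_le (hf : AEStronglyMeasurable f (volume.restrict (Ioi 0)))
    (hM : ∀ t > 0, ‖f t‖ ≤ M) {a b : ℝ} (ha : 0 ≤ a) (hb : 0 ≤ b) :
    IntervalIntegrable f volume a b := by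
  have hsub : uIoc a b ⊆ Ioi 0 := fun t ht => (le_min ha hb).trans_lt ht.1
  refine (intervalIntegrable_const (c := (M : ℝ))).mono_fun (hf.mono_set hsub) ?_
  filter_upwards [ae_restrict_mem measurableSet_uIoc] with t ht
  simpa using hM t (hsub ht)

variable [NormedSpace ℂ E] {z : ℂ}

/-- The Laplace transform `∫₀^∞ exp (-z t) f t dt`, a Bochner integral (hence `0` where the
integrand is not integrable). -/
noncomputable def laplace (f : ℝ → E) (z : ℂ) : E :=
  ∫ t in Ioi (0 : ℝ), Complex.exp (-(z * t)) • f t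

lemma norm_cexp_neg_mul_ofReal (z : ℂ) (t : ℝ) :
    ‖Complex.exp (-(z * t))‖ = Real.exp (-z.re * t) := by
  simp [Complex.norm_exp]

lemma integrableOn_cexp_neg_mul_Ioi (hz : 0 < z.re) :
    IntegrableOn (fun t : ℝ => Complex.exp (-(z * t))) (Ioi 0) := by
  simpa using integrableOn_exp_mul_complex_Ioi (a := -z) (by simpa using hz) 0

lemma integral_cexp_neg_mul_Ioi (hz : 0 < z.re) :
    ∫ t in Ioi (0 : ℝ), Complex.exp (-(z * t)) = z⁻¹ := by
  simpa [neg_div_neg_eq] using integral_exp_mul_complex_Ioi (a := -z) (by simpa using hz) 0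

lemma integrableOn_cexp_smul (hf : AEStronglyMeasurable f (volume.restrict (Ioi 0)))
    {A B : ℝ} (hAB : ∀ t > 0, ‖f t‖ ≤ A + B * t) (hz : 0 < z.re) :
    IntegrableOn (fun t : ℝ => Complex.exp (-(z * t)) • f t) (Ioi 0) := by
  have hexp : IntegrableOn (fun t : ℝ => Real.exp (-z.re * t)) (Ioi 0) :=
    integrableOn_exp_mul_Ioi (neg_lt_zero.2 hz) 0
  have hmulexp : IntegrableOn (fun t : ℝ => t * Real.exp (-z.re * t)) (Ioi 0) := by
    simpa using integrableOn_rpow_mul_exp_neg_mul_rpow (s := 1) (p := 1) (by norm_num) one_pos hz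
  refine ((hexp.const_mul A).add (hmulexp.const_mul B)).mono'
    ((Continuous.aestronglyMeasurable (by fun_prop)).smul hf) ?_
  filter_upwards [ae_restrict_mem measurableSet_Ioi] with t ht
  rw [norm_smul, norm_cexp_neg_mul_ofReal]
  calc Real.exp (-z.re * t) * ‖f t‖
      ≤ Real.exp (-z.re * t) * (A + B * t) := by gcongr; exact hAB t ht
    _ = A * Real.exp (-z.re * t) + B * (t * Real.exp (-z.re * t)) := by ring

lemma laplace_sub {g : ℝ → E}
    (hf : IntegrableOn (fun t : ℝ => Complex.exp (-(z * t)) • f t) (Ioi 0))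
    (hg : IntegrableOn (fun t : ℝ => Complex.exp (-(z * t)) • g t) (Ioi 0)) :
    laplace (fun t => f t - g t) z = laplace f z - laplace g z := by
  simp only [laplace, smul_sub]
  exact integral_sub hf hg

lemma tendsto_laplace_nhdsGT_zero (hf : IntegrableOn f (Ioi 0)) :
    Tendsto (fun ε : ℝ => laplace f ε) (𝓝[>] 0) (𝓝 (∫ t in Ioi (0 : ℝ), f t)) := by
  refine tendsto_integral_filter_of_dominated_convergence (fun t => ‖f t‖) ?_ ?_ hf.norm ?_
  · exact Eventually.of_forall fun ε =>
      (Continuous.aestronglyMeasurable (by fun_prop)).smul hf.aestronglyMeasurable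
  · filter_upwards [self_mem_nhdsWithin] with ε (hε : 0 < ε)
    filter_upwards [ae_restrict_mem measurableSet_Ioi] with t (ht : 0 < t)
    rw [norm_smul, norm_cexp_neg_mul_ofReal, Complex.ofReal_re]
    exact mul_le_of_le_one_left (norm_nonneg _) (Real.exp_le_one_iff.2 (by nlinarith))
  · refine ae_of_all _ fun t => ?_
    have hcont : Continuous fun ε : ℝ => Complex.exp (-(ε * t)) • f t := by fun_prop
    simpa using (hcont.tendsto 0).mono_left nhdsWithin_le_nhds

lemma laplace_add_two_pi_mul_I (f : ℝ → E) (z : ℂ) (y : ℝ) :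
    laplace f (z + 2 * π * y * Complex.I) =
      𝓕 ((Ioi (0 : ℝ)).indicator fun t : ℝ => Complex.exp (-(z * t)) • f t) y := by
  rw [Real.fourier_real_eq_integral_exp_smul, laplace, ← integral_indicator measurableSet_Ioi]
  congr 1 with t
  by_cases ht : t ∈ Ioi (0 : ℝ)
  · simp only [indicator_of_mem ht, smul_smul, ← Complex.exp_add]
    push_cast
    ring_nf
  · simp only [indicator_of_notMem ht, smul_zero]

lemma fourier_comp_add_right (g : ℝ → E) (T : ℝ) :
    𝓕 (fun u => g (u + T)) = fun y => 𝐞 (T * y) • 𝓕 g y := by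
  simpa [mul_comm] using! VectorFourier.fourierIntegral_comp_add_right 𝐞 volume (innerₗ ℝ) g T

lemma integral_fourier_comp_sub_smul [CompleteSpace E] (φ : 𝓢(ℝ, ℂ)) {g : ℝ → E}
    (hg : Integrable g) (T : ℝ) :
    ∫ t, 𝓕 φ (t - T) • g t = ∫ y, 𝐞 (T * y) • φ y • 𝓕 g y := by
  have hflip : ∫ u, 𝓕 φ u • g (u + T) = ∫ y, φ y • 𝓕 (fun u => g (u + T)) y := by
    simpa using! VectorFourier.integral_fourierIntegral_smul_eq_flip (L := innerₗ ℝ)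
      Real.continuous_fourierChar continuous_inner φ.integrable (hg.comp_add_right T)
  rw [← integral_add_right_eq_self _ T]
  simp only [add_sub_cancel_right]
  rw [hflip, fourier_comp_add_right]
  simp only [smul_comm (𝐞 _)]

lemma laplace_fourier_comp_sub_smul [CompleteSpace E] (φ : 𝓢(ℝ, ℂ))
    (hf : IntegrableOn (fun t : ℝ => Complex.exp (-(z * t)) • f t) (Ioi 0)) (T : ℝ) :
    laplace (fun t => 𝓕 φ (t - T) • f t) z =
      ∫ y : ℝ, 𝐞 (T * y) • φ y • laplace f (z + 2 * π * y * Complex.I) := by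
  simp_rw [laplace_add_two_pi_mul_I, ← integral_fourier_comp_sub_smul φ
    ((integrable_indicator_iff measurableSet_Ioi).2 hf), laplace, smul_comm _ (𝓕 φ _),
    ← indicator_smul_apply (Ioi (0 : ℝ)) (fun t => 𝓕 φ (t - T))]
  exact (integral_indicator measurableSet_Ioi).symm

lemma integrableOn_schwartz_comp_sub_smul (K : 𝓢(ℝ, ℂ))
    (hf : AEStronglyMeasurable f (volume.restrict (Ioi 0)))
    {A B : ℝ} (hAB : ∀ t > 0, ‖f t‖ ≤ A + B * t) (T : ℝ) :
    IntegrableOn (fun t => K (t - T) • f t) (Ioi 0) := by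
  have hint : Integrable fun u : ℝ => (A + B * T) * ‖K u‖ + |B| * (‖u‖ ^ 1 * ‖K u‖) :=
    (K.integrable.norm.const_mul _).add ((K.integrable_pow_mul volume 1).const_mul _)
  refine (hint.comp_sub_right T).integrableOn.mono'
    ((Continuous.aestronglyMeasurable (by fun_prop)).smul hf) ?_
  filter_upwards [ae_restrict_mem measurableSet_Ioi] with t ht
  have habs : B * (t - T) ≤ |B| * ‖t - T‖ := (le_abs_self _).trans_eq (abs_mul _ _)
  calc ‖K (t - T) • f t‖ = ‖K (t - T)‖ * ‖f t‖ := norm_smul _ _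
    _ ≤ ‖K (t - T)‖ * (A + B * T + |B| * ‖t - T‖) := by gcongr; linarith [hAB t ht]
    _ = (A + B * T) * ‖K (t - T)‖ + |B| * (‖t - T‖ ^ 1 * ‖K (t - T)‖) := by ring

lemma integral_fourier_comp_sub_smul_eq_of_laplace [CompleteSpace E]
    (hf : AEStronglyMeasurable f (volume.restrict (Ioi 0)))
    {A B : ℝ} (hAB : ∀ t > 0, ‖f t‖ ≤ A + B * t) {k : ℂ → E}
    (hk : ContinuousOn k {z | 0 ≤ z.re}) (hfk : ∀ z : ℂ, 0 < z.re → laplace f z = k z)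
    {φ : 𝓢(ℝ, ℂ)} (hφ : HasCompactSupport φ) (T : ℝ) :
    ∫ t in Ioi (0 : ℝ), 𝓕 φ (t - T) • f t =
      ∫ y : ℝ, 𝐞 (T * y) • φ y • k (2 * π * y * Complex.I) := by
  have hlim := tendsto_laplace_nhdsGT_zero (integrableOn_schwartz_comp_sub_smul (𝓕 φ) hf hAB T)
  have hcont : ContinuousOn (fun ε : ℝ => ∫ y : ℝ,
      𝐞 (T * y) • φ y • k (ε + 2 * π * y * Complex.I)) (Ici 0) := by
    refine continuousOn_integral_of_compact_support hφ ?_ fun ε y _ hy => by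
      simp [image_eq_zero_of_notMem_tsupport hy]
    have hk' : ContinuousOn (fun p : ℝ × ℝ => k (p.1 + 2 * π * p.2 * Complex.I)) (Ici 0 ×ˢ univ) :=
      hk.comp (by fun_prop) fun p hp => by simpa using hp.1
    exact ContinuousOn.smul (by fun_prop) (ContinuousOn.smul (by fun_prop) hk')
  have hlim' := (hcont 0 self_mem_Ici).tendsto.mono_left
    (nhdsWithin_mono 0 Ioi_subset_Ici_self)
  simp only [Complex.ofReal_zero, zero_add] at hlim'
  refine tendsto_nhds_unique (hlim.congr' ?_) hlim'
  filter_upwards [self_mem_nhdsWithin] with ε (hε : 0 < ε)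
  rw [laplace_fourier_comp_sub_smul φ (integrableOn_cexp_smul hf hAB (by simpa using hε))]
  congr 1 with y
  rw [hfk _ (by simpa using hε)]

lemma tendsto_integral_fourier_comp_sub_smul_of_laplace [CompleteSpace E]
    (hf : AEStronglyMeasurable f (volume.restrict (Ioi 0)))
    {A B : ℝ} (hAB : ∀ t > 0, ‖f t‖ ≤ A + B * t) {k : ℂ → E}
    (hk : ContinuousOn k {z | 0 ≤ z.re}) (hfk : ∀ z : ℂ, 0 < z.re → laplace f z = k z)
    {φ : 𝓢(ℝ, ℂ)} (hφ : HasCompactSupport φ) :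
    Tendsto (fun T => ∫ t in Ioi (0 : ℝ), 𝓕 φ (t - T) • f t) atTop (𝓝 0) := by
  simp_rw [integral_fourier_comp_sub_smul_eq_of_laplace hf hAB hk hfk hφ]
  have hRL := Real.tendsto_integral_exp_smul_cocompact
    fun y : ℝ => φ y • k (2 * π * y * Complex.I)
  simpa [Function.comp_def, mul_comm] using
    hRL.comp (tendsto_neg_atTop_atBot.mono_right atBot_le_cocompact)

lemma fourier_comp_mul_left (g : ℝ → E) {R : ℝ} (hR : R ≠ 0) (u : ℝ) :
    𝓕 (fun x => g (R * x)) u = |R⁻¹| • 𝓕 g (u / R) := by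
  simp_rw [Real.fourier_real_eq]
  rw [← Measure.integral_comp_mul_left (fun x => 𝐞 (-(x * (u / R))) • g x)]
  congr! 5 with x
  field_simp

lemma integral_norm_mul_norm_fourier_comp_mul_left (g : ℝ → E) {R : ℝ} (hR : 0 < R) :
    ∫ u, ‖u‖ * ‖𝓕 (fun x => g (R * x)) u‖ = R * ∫ u, ‖u‖ * ‖𝓕 g u‖ := by
  have hscale (u : ℝ) : ‖u‖ * ‖𝓕 (fun x => g (R * x)) u‖ = ‖u / R‖ * ‖𝓕 g (u / R)‖ := by
    rw [fourier_comp_mul_left g hR.ne', norm_smul, norm_div, Real.norm_eq_abs |R⁻¹|, abs_abs,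
      abs_inv, Real.norm_eq_abs R]
    ring
  simp_rw [hscale]
  rw [Measure.integral_comp_div (fun u => ‖u‖ * ‖𝓕 g u‖), abs_of_pos hR, smul_eq_mul]

lemma integral_fourier_eq_apply_zero (φ : 𝓢(ℝ, ℂ)) : ∫ u, 𝓕 φ u = φ 0 := by
  have hinv : 𝓕⁻ (𝓕 φ) = φ := FourierTransform.fourierInv_fourier_eq φ
  rw [← DFunLike.congr_fun hinv 0, SchwartzMap.fourierInv_coe, Real.fourierInv_eq']
  simp

lemma exists_schwartz_hasCompactSupport_apply_zero :
    ∃ φ : 𝓢(ℝ, ℂ), HasCompactSupport φ ∧ φ 0 = 1 := by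
  let b : ContDiffBump (0 : ℝ) := ⟨1, 2, one_pos, one_lt_two⟩
  have hb : HasCompactSupport fun x => (b x : ℂ) :=
    b.hasCompactSupport.comp_left Complex.ofReal_zero
  refine ⟨hb.toSchwartzMap (Complex.ofRealCLM.contDiff.comp b.contDiff), hb, ?_⟩
  change ((b 0 : ℝ) : ℂ) = 1
  rw [b.one_of_mem_closedBall (Metric.mem_closedBall_self zero_le_one), Complex.ofReal_one]

lemma exists_schwartz_hasCompactSupport_integral_fourier_lt {η : ℝ} (hη : 0 < η) :
    ∃ φ : 𝓢(ℝ, ℂ), HasCompactSupport φ ∧ φ 0 = 1 ∧ (∫ u, ‖u‖ * ‖𝓕 φ u‖) < η := by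
  obtain ⟨φ, hφ, hφ0⟩ := exists_schwartz_hasCompactSupport_apply_zero
  obtain ⟨R, hR, hRη⟩ := exists_pos_mul_lt hη (∫ u, ‖u‖ * ‖𝓕 φ u‖)
  have hφR : HasCompactSupport fun x => φ (R * x) := by
    simpa only [smul_eq_mul] using hφ.comp_smul hR.ne'
  refine ⟨hφR.toSchwartzMap ((φ.smooth ⊤).comp (by fun_prop)), hφR, by simp [hφ0], ?_⟩
  rw [SchwartzMap.fourier_coe]
  exact (integral_norm_mul_norm_fourier_comp_mul_left φ hR).trans_lt (by rwa [mul_comm])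

lemma norm_le_add_norm_integral_schwartz_comp_sub_smul [CompleteSpace E]
    (hW : LipschitzOnWith M W (Ici 0)) {K : 𝓢(ℝ, ℂ)} (hK : ∫ u, K u = 1) (hT : 0 < T) :
    ‖W T‖ ≤ (M + ‖W 0‖ / T) * (∫ u, ‖u‖ * ‖K u‖) + ‖∫ t in Ioi 0, K (t - T) • W t‖ := by
  have hsmul : (fun t => K (t - T) • (Ioi 0).indicator W t) =
      (Ioi 0).indicator fun t => K (t - T) • W t := (indicator_smul _ _ _).symm
  have hmoment : Integrable fun u => ‖u‖ * ‖K u‖ := by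
    simpa using K.integrable_pow_mul volume 1
  have hKT : Integrable fun t => K (t - T) • W T := (K.integrable.comp_sub_right T).smul_const _
  have hKW : Integrable fun t => K (t - T) • (Ioi 0).indicator W t := by
    rw [hsmul, integrable_indicator_iff measurableSet_Ioi]
    exact integrableOn_schwartz_comp_sub_smul K (aestronglyMeasurable_of_lipschitzOnWith_Ici hW)
      (fun t ht => norm_le_of_lipschitzOnWith_Ici hW ht.le) T
  have hdecomp : W T = (∫ t, K (t - T) • (W T - (Ioi 0).indicator W t)) +
      ∫ t in Ioi 0, K (t - T) • W t := by
    simp_rw [smul_sub]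
    rw [integral_sub hKT hKW, hsmul, integral_indicator measurableSet_Ioi, sub_add_cancel,
      integral_smul_const, integral_sub_right_eq_self (fun u => K u) T, hK, one_smul]
  have hbound : ‖∫ t, K (t - T) • (W T - (Ioi 0).indicator W t)‖ ≤
      (M + ‖W 0‖ / T) * ∫ u, ‖u‖ * ‖K u‖ := by
    rw [← integral_const_mul,
      ← integral_sub_right_eq_self (fun u => (M + ‖W 0‖ / T) * (‖u‖ * ‖K u‖)) T]
    refine norm_integral_le_of_norm_le ((hmoment.const_mul _).comp_sub_right T)
      (ae_of_all _ fun t => ?_)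
    rw [norm_smul, mul_comm, ← mul_assoc]
    gcongr
    exact norm_sub_indicator_le_of_lipschitzOnWith_Ici hW hT t
  calc ‖W T‖ ≤ _ := hdecomp ▸ norm_add_le _ _
    _ ≤ _ := by gcongr

theorem tendsto_zero_of_lipschitzOnWith_of_laplace [CompleteSpace E]
    (hW : LipschitzOnWith M W (Ici 0)) {k : ℂ → E} (hk : ContinuousOn k {z | 0 ≤ z.re})
    (hWk : ∀ z : ℂ, 0 < z.re → laplace W z = k z) : Tendsto W atTop (𝓝 0) := by
  rw [tendsto_zero_iff_norm_tendsto_zero]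
  refine (tendsto_order.2 ⟨fun a ha => .of_forall fun _ => ha.trans_le (norm_nonneg _),
    fun δ hδ => ?_⟩)
  obtain ⟨η, hη, hMη⟩ := exists_pos_mul_lt hδ M
  obtain ⟨φ, hφ, hφ0, hφη⟩ := exists_schwartz_hasCompactSupport_integral_fourier_lt hη
  have hsmooth := tendsto_integral_fourier_comp_sub_smul_of_laplace
    (aestronglyMeasurable_of_lipschitzOnWith_Ici hW)
    (fun t ht => norm_le_of_lipschitzOnWith_Ici hW ht.le) hk hWk hφ
  have hlim : Tendsto (fun T => (M + ‖W 0‖ / T) * (∫ u, ‖u‖ * ‖𝓕 φ u‖) +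
      ‖∫ t in Ioi 0, 𝓕 φ (t - T) • W t‖) atTop (𝓝 (M * ∫ u, ‖u‖ * ‖𝓕 φ u‖)) := by
    simpa using ((tendsto_const_nhds.div_atTop tendsto_id).const_add (M : ℝ) |>.mul_const
      (∫ u, ‖u‖ * ‖𝓕 φ u‖)).add hsmooth.norm
  have hlt : M * ∫ u, ‖u‖ * ‖𝓕 φ u‖ < δ := lt_of_le_of_lt (by gcongr) hMη
  filter_upwards [hlim.eventually_lt_const hlt, eventually_gt_atTop 0] with T hT hT0
  exact (norm_le_add_norm_integral_schwartz_comp_sub_smul hW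
    ((integral_fourier_eq_apply_zero φ).trans hφ0) hT0).trans_lt hT

lemma lipschitzOnWith_intervalIntegral (hf : AEStronglyMeasurable f (volume.restrict (Ioi 0)))
    (hM : ∀ t > 0, ‖f t‖ ≤ M) : LipschitzOnWith M (fun T => ∫ t in 0..T, f t) (Ici 0) := by
  refine LipschitzOnWith.of_dist_le_mul fun x (hx : 0 ≤ x) y (hy : 0 ≤ y) => ?_
  rw [dist_eq_norm, intervalIntegral.integral_interval_sub_left
    (intervalIntegrable_of_norm_le hf hM le_rfl hx) (intervalIntegrable_of_norm_le hf hM le_rfl hy)]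
  exact intervalIntegral.norm_integral_le_of_norm_le_const fun t ht =>
    hM t ((le_min hy hx).trans_lt ht.1)

lemma laplace_intervalIntegral [CompleteSpace E]
    (hf : IntegrableOn (fun t : ℝ => Complex.exp (-(z * t)) • f t) (Ioi 0)) (hz : 0 < z.re) :
    laplace (fun T => ∫ t in 0..T, f t) z = z⁻¹ • laplace f z := by
  have hconv := integral_posConvolution hf (integrableOn_cexp_neg_mul_Ioi hz)
    (ContinuousLinearMap.lsmul ℝ ℂ).flip
  simp only [ContinuousLinearMap.flip_apply, ContinuousLinearMap.lsmul_apply,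
    integral_cexp_neg_mul_Ioi hz] at hconv
  rw [laplace, laplace, ← hconv]
  refine integral_congr_ae (ae_of_all _ fun x => ?_)
  simp only [← intervalIntegral.integral_smul, smul_smul, ← Complex.exp_add]
  congr! 4 with t
  push_cast
  ring

theorem tendsto_intervalIntegral_of_laplace [CompleteSpace E]
    (hf : AEStronglyMeasurable f (volume.restrict (Ioi 0))) (hM : ∀ t > 0, ‖f t‖ ≤ M)
    {G : ℂ → E} (hG : ContinuousOn (dslope G 0) {z | 0 ≤ z.re})
    (hfG : ∀ z : ℂ, 0 < z.re → laplace f z = G z) :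
    Tendsto (fun T => ∫ t in 0..T, f t) atTop (𝓝 (G 0)) := by
  have hlip := lipschitzOnWith_intervalIntegral hf hM
  have hW : LipschitzOnWith M (fun T => (∫ t in 0..T, f t) - G 0) (Ici 0) := by
    simpa using hlip.sub (LipschitzWith.const (G 0)).lipschitzOnWith
  rw [← tendsto_sub_nhds_zero_iff]
  refine tendsto_zero_of_lipschitzOnWith_of_laplace hW hG fun z hz => ?_
  have hz0 : z ≠ 0 := by rintro rfl; simp at hz
  have hexp := integrableOn_cexp_neg_mul_Ioi hz
  rw [laplace_sub _ (hexp.smul_const (G 0)), laplace_intervalIntegral _ hz, hfG z hz, laplace,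
    integral_smul_const, integral_cexp_neg_mul_Ioi hz, dslope_of_ne _ hz0, slope_def_module,
    sub_zero, smul_sub]
  · exact integrableOn_cexp_smul (B := 0) hf (by simpa using hM) hz
  · exact integrableOn_cexp_smul (aestronglyMeasurable_of_lipschitzOnWith_Ici hlip)
      (fun t ht => norm_le_of_lipschitzOnWith_Ici hlip ht.le) hz

end Laplace

section Monotone

open MeasureTheory Set Real

variable {g : ℝ → ℝ} {A h s t T L : ℝ}

lemma le_exp_mul_of_monotoneOn_exp_mul (hmono : MonotoneOn (fun t => rexp t * g t) (Ici 0))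
    (hg : ∀ t ≥ 0, 0 ≤ g t) (hs : 0 ≤ s) (hst : s ≤ t) (hth : t ≤ s + h) :
    g s ≤ rexp h * g t := by
  have ht : 0 ≤ t := hs.trans hst
  calc g s = rexp (-s) * (rexp s * g s) := by rw [← mul_assoc, ← exp_add]; simp
    _ ≤ rexp (-s) * (rexp t * g t) := mul_le_mul_of_nonneg_left (hmono hs ht hst) (exp_pos _).le
    _ = rexp (t - s) * g t := by rw [← mul_assoc, ← exp_add]; ring_nf
    _ ≤ rexp h * g t := by gcongr; exacts [hg t ht, by linarith]

lemma intervalIntegrable_of_monotoneOn_exp_mul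
    (hmono : MonotoneOn (fun t => rexp t * g t) (Ici 0)) (hs : 0 ≤ s) (ht : 0 ≤ t) :
    IntervalIntegrable g volume s t := by
  have hsub : uIcc s t ⊆ Ici 0 := fun u hu => (le_min hs ht).trans hu.1
  refine ((hmono.mono hsub).intervalIntegrable.continuousOn_mul
    (g := fun u => rexp (-u)) (by fun_prop)).congr fun u _ => ?_
  simp [← mul_assoc, ← exp_add]

lemma le_exp_mul_average_of_monotoneOn_exp_mul
    (hmono : MonotoneOn (fun t => rexp t * g t) (Ici 0)) (hg : ∀ t ≥ 0, 0 ≤ g t)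
    (hT : 0 ≤ T) (hh : 0 < h) :
    g T ≤ rexp h * (h⁻¹ * ∫ u in T..(T + h), g u) := by
  have hint := intervalIntegrable_of_monotoneOn_exp_mul hmono hT (by positivity : 0 ≤ T + h)
  have hconst : ∫ _ in T..(T + h), g T ≤ ∫ u in T..(T + h), rexp h * g u :=
    intervalIntegral.integral_mono_on (by linarith) intervalIntegrable_const (hint.const_mul _)
      fun u hu => le_exp_mul_of_monotoneOn_exp_mul hmono hg hT hu.1 hu.2
  rw [intervalIntegral.integral_const, intervalIntegral.integral_const_mul, add_sub_cancel_left,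
    smul_eq_mul] at hconst
  rw [mul_left_comm, ← div_eq_inv_mul, le_div_iff₀ hh]
  linarith

lemma exp_neg_mul_average_le_of_monotoneOn_exp_mul
    (hmono : MonotoneOn (fun t => rexp t * g t) (Ici 0)) (hg : ∀ t ≥ 0, 0 ≤ g t)
    (hT : 0 ≤ T) (hh : 0 < h) :
    rexp (-h) * (h⁻¹ * ∫ u in T..(T + h), g u) ≤ g (T + h) := by
  have hint := intervalIntegrable_of_monotoneOn_exp_mul hmono hT (by positivity : 0 ≤ T + h)
  have hconst : ∫ u in T..(T + h), g u ≤ ∫ _ in T..(T + h), rexp h * g (T + h) :=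
    intervalIntegral.integral_mono_on (by linarith) hint intervalIntegrable_const
      fun u hu =>
        le_exp_mul_of_monotoneOn_exp_mul hmono hg (hT.trans hu.1) hu.2 (by linarith [hu.1])
  rw [intervalIntegral.integral_const, add_sub_cancel_left, smul_eq_mul] at hconst
  rw [exp_neg, inv_mul_le_iff₀ (exp_pos h), inv_mul_le_iff₀ hh]
  exact hconst

lemma tendsto_average_of_tendsto_intervalIntegral_sub
    (hmono : MonotoneOn (fun t => rexp t * g t) (Ici 0))
    (hL : Tendsto (fun T => ∫ t in 0..T, (g t - A)) atTop (𝓝 L)) (hh : 0 < h) :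
    Tendsto (fun T => h⁻¹ * ∫ t in T..(T + h), g t) atTop (𝓝 A) := by
  have hdiff := (hL.comp (tendsto_atTop_add_const_right atTop h tendsto_id)).sub hL
  have hlim := (hdiff.const_mul h⁻¹).add_const A
  rw [sub_self, mul_zero, zero_add] at hlim
  refine hlim.congr' ?_
  filter_upwards [eventually_ge_atTop 0] with T hT
  have hTh : 0 ≤ T + h := by positivity
  have hint {s t : ℝ} (hs : 0 ≤ s) (ht : 0 ≤ t) :=
    intervalIntegrable_of_monotoneOn_exp_mul hmono hs ht
  rw [Function.comp_apply, id, intervalIntegral.integral_interval_sub_left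
    ((hint le_rfl hTh).sub intervalIntegrable_const)
    ((hint le_rfl hT).sub intervalIntegrable_const),
    intervalIntegral.integral_sub (hint hT hTh) intervalIntegrable_const,
    intervalIntegral.integral_const, smul_eq_mul]
  field_simp
  ring

theorem tendsto_of_tendsto_intervalIntegral_sub
    (hmono : MonotoneOn (fun t => rexp t * g t) (Ici 0)) (hg : ∀ t ≥ 0, 0 ≤ g t)
    (hL : Tendsto (fun T => ∫ t in 0..T, (g t - A)) atTop (𝓝 L)) : Tendsto g atTop (𝓝 A) := by
  refine tendsto_order.2 ⟨fun a ha => ?_, fun b hb => ?_⟩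
  · have hexp : ∀ᶠ h in 𝓝[>] (0 : ℝ), a < rexp (-h) * A :=
      ((by fun_prop : Continuous fun h => rexp (-h) * A).tendsto' 0 A (by simp)).mono_left
        nhdsWithin_le_nhds |>.eventually_const_lt ha
    obtain ⟨h, hah, hh : 0 < h⟩ := (hexp.and self_mem_nhdsWithin).exists
    have haverage := (tendsto_average_of_tendsto_intervalIntegral_sub hmono hL hh).const_mul
      (rexp (-h)) |>.comp (tendsto_atTop_add_const_right atTop (-h) tendsto_id)
    filter_upwards [haverage.eventually_const_lt hah, eventually_ge_atTop h] with T hT hhT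
    simpa using hT.trans_le
      (exp_neg_mul_average_le_of_monotoneOn_exp_mul hmono hg (by simpa using hhT) hh)
  · have hexp : ∀ᶠ h in 𝓝[>] (0 : ℝ), rexp h * A < b :=
      ((by fun_prop : Continuous fun h => rexp h * A).tendsto' 0 A (by simp)).mono_left
        nhdsWithin_le_nhds |>.eventually_lt_const hb
    obtain ⟨h, hbh, hh : 0 < h⟩ := (hexp.and self_mem_nhdsWithin).exists
    have haverage := (tendsto_average_of_tendsto_intervalIntegral_sub hmono hL hh).const_mul
      (rexp h)
    filter_upwards [haverage.eventually_lt_const hbh, eventually_ge_atTop 0] with T hT hT0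
    exact (le_exp_mul_average_of_monotoneOn_exp_mul hmono hg hT0 hh).trans_lt hT

end Monotone

section DirichletSeries

open MeasureTheory Set Real

variable {a : ℕ → ℝ} {C : ℝ}

/-- The partial sums of a sequence on the exponential scale, normalized so that they are bounded
when `∑ k ≤ n, a k = O(n)`: this is `exp (-t) * ∑ k ≤ exp t, a k`. -/
noncomputable def normalizedSum (a : ℕ → ℝ) (t : ℝ) : ℝ :=
  rexp (-t) * ∑ k ∈ Finset.Icc 1 ⌊rexp t⌋₊, a k

lemma measurable_normalizedSum (a : ℕ → ℝ) : Measurable (normalizedSum a) := by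
  have hsum : Measurable fun n : ℕ => ∑ k ∈ Finset.Icc 1 n, a k := measurable_from_nat
  exact (by fun_prop : Measurable fun t : ℝ => rexp (-t)).mul
    (hsum.comp (Nat.measurable_floor.comp measurable_exp))

lemma exp_mul_normalizedSum (a : ℕ → ℝ) (t : ℝ) :
    rexp t * normalizedSum a t = ∑ k ∈ Finset.Icc 1 ⌊rexp t⌋₊, a k := by
  rw [normalizedSum, ← mul_assoc, ← exp_add, add_neg_cancel, exp_zero, one_mul]

lemma normalizedSum_nonneg (ha : ∀ n, 0 ≤ a n) (t : ℝ) : 0 ≤ normalizedSum a t :=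
  mul_nonneg (exp_pos _).le (Finset.sum_nonneg fun k _ => ha k)

lemma normalizedSum_le (ha : ∀ n, 0 ≤ a n) (hC : ∀ n : ℕ, ∑ k ∈ Finset.Icc 1 n, a k ≤ C * n)
    (t : ℝ) : normalizedSum a t ≤ C := by
  have hC0 : 0 ≤ C := by simpa using (ha 1).trans (by simpa using hC 1)
  refine le_of_mul_le_mul_left ?_ (exp_pos t)
  rw [exp_mul_normalizedSum, mul_comm _ C]
  exact (hC _).trans (by gcongr; exact Nat.floor_le (exp_pos t).le)

lemma monotone_exp_mul_normalizedSum (ha : ∀ n, 0 ≤ a n) :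
    Monotone fun t => rexp t * normalizedSum a t := by
  intro s t hst
  simp only [exp_mul_normalizedSum]
  exact Finset.sum_le_sum_of_subset_of_nonneg
    (Finset.Icc_subset_Icc_right (Nat.floor_le_floor (exp_le_exp.2 hst))) fun k _ _ => ha k

lemma laplace_normalizedSum (ha : ∀ n, 0 ≤ a n)
    (hC : ∀ n : ℕ, ∑ k ∈ Finset.Icc 1 n, a k ≤ C * n) {z : ℂ} (hz : 0 < z.re) :
    laplace (fun t => (normalizedSum a t : ℂ)) z = LSeries (fun n => a n) (1 + z) / (1 + z) := by
  have hO : (fun n : ℕ => ∑ k ∈ Finset.Icc 1 n, a k) =O[atTop] fun n => (n : ℝ) ^ (1 : ℝ) := by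
    refine Asymptotics.IsBigO.of_bound C (.of_forall fun n => ?_)
    rw [norm_of_nonneg (Finset.sum_nonneg fun k _ => ha k)]
    simpa using hC n
  have hz1 : 1 + z ≠ 0 := Complex.ne_zero_of_re_pos (by simpa using by linarith)
  rw [LSeries_eq_mul_integral_of_nonneg a zero_le_one (s := 1 + z) (by simpa using hz) hO ha,
    mul_div_cancel_left₀ _ hz1, ← exp_zero, ← integral_comp_exp_Ioi, laplace]
  congr 1 with t
  rw [Complex.cpow_def_of_ne_zero (mod_cast (exp_pos t).ne'), ← Complex.ofReal_log (exp_pos t).le,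
    log_exp, normalizedSum, smul_eq_mul, Complex.real_smul]
  push_cast
  rw [mul_left_comm, ← mul_assoc, mul_comm, ← Complex.exp_add, mul_left_comm, ← Complex.exp_add]
  ring_nf

lemma integral_comp_exp_Ioc {E : Type*} [NormedAddCommGroup E] [NormedSpace ℝ E] (g : ℝ → E)
    (a b : ℝ) : ∫ t in Ioc a b, rexp t • g (rexp t) = ∫ x in Ioc (rexp a) (rexp b), g x := by
  rw [← image_exp_Ioc, integral_image_eq_integral_abs_deriv_smul measurableSet_Ioc
    (fun x _ => (hasDerivAt_exp x).hasDerivWithinAt) exp_injective.injOn]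
  simp only [abs_exp]

lemma sum_div_eq_inv_mul_sum_add_integral (a : ℕ → ℝ) (x : ℝ) :
    ∑ n ∈ Finset.Icc 1 ⌊x⌋₊, a n / n = x⁻¹ * ∑ n ∈ Finset.Icc 1 ⌊x⌋₊, a n +
      ∫ y in Ioc 1 x, (y ^ 2)⁻¹ * ∑ n ∈ Finset.Icc 1 ⌊y⌋₊, a n := by
  have hsum (b : ℕ → ℝ) (N : ℕ) :
      ∑ k ∈ Finset.Icc 0 N, (if k = 0 then 0 else b k) = ∑ k ∈ Finset.Icc 1 N, b k := by
    rw [← Finset.add_sum_Ioc_eq_sum_Icc (Nat.zero_le N), if_pos rfl, zero_add]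
    exact Finset.sum_congr rfl fun k hk => if_neg (Finset.mem_Ioc.1 hk).1.ne'
  have habel := sum_mul_eq_sub_integral_mul₀ (f := fun x : ℝ => x⁻¹)
    (fun n => if n = 0 then 0 else a n) (if_pos rfl) x
    (fun t ht => (hasDerivAt_inv (by linarith [ht.1] : t ≠ 0)).differentiableAt) (by
      refine ContinuousOn.integrableOn_compact isCompact_Icc ?_
      simp only [deriv_inv']
      refine ContinuousOn.neg (ContinuousOn.inv₀ (by fun_prop) fun t ht => ?_)
      have : 0 < t := by linarith [ht.1]
      positivity)
  simp only [hsum, mul_ite, mul_zero, deriv_inv', neg_mul, integral_neg, sub_neg_eq_add] at habel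
  simp only [div_eq_inv_mul, habel]

lemma sum_div_eq_normalizedSum_add_integral (a : ℕ → ℝ) {T : ℝ} (hT : 0 ≤ T) :
    ∑ n ∈ Finset.Icc 1 ⌊rexp T⌋₊, a n / n =
      normalizedSum a T + ∫ t in 0..T, normalizedSum a t := by
  rw [sum_div_eq_inv_mul_sum_add_integral, intervalIntegral.integral_of_le hT, normalizedSum,
    exp_neg, ← exp_zero, ← integral_comp_exp_Ioc]
  congr 2 with t
  rw [← exp_mul_normalizedSum, smul_eq_mul]
  field_simp

lemma norm_normalizedSum_le (ha : ∀ n, 0 ≤ a n)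
    (hC : ∀ n : ℕ, ∑ k ∈ Finset.Icc 1 n, a k ≤ C * n) (t : ℝ) : ‖normalizedSum a t‖ ≤ C :=
  (norm_of_nonneg (normalizedSum_nonneg ha t)).trans_le (normalizedSum_le ha hC t)

lemma laplace_normalizedSum_sub_const (ha : ∀ n, 0 ≤ a n)
    (hC : ∀ n : ℕ, ∑ k ∈ Finset.Icc 1 n, a k ≤ C * n) {A : ℝ} {F : ℂ → ℂ}
    (hL : ∀ s : ℂ, 1 < s.re → LSeries (fun n => a n) s = F s + A / (s - 1)) {z : ℂ}
    (hz : 0 < z.re) :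
    laplace (fun t => ((normalizedSum a t : ℂ) - A)) z = (F (1 + z) - A) / (1 + z) := by
  have hz0 : z ≠ 0 := Complex.ne_zero_of_re_pos hz
  have hz1 : 1 + z ≠ 0 := Complex.ne_zero_of_re_pos (by simpa using by linarith)
  have hmeas : Measurable fun t => (normalizedSum a t : ℂ) :=
    Complex.measurable_ofReal.comp (measurable_normalizedSum a)
  have hint : IntegrableOn
      (fun t : ℝ => Complex.exp (-(z * t)) • (normalizedSum a t : ℂ)) (Ioi 0) :=
    integrableOn_cexp_smul (A := C) (B := 0) hmeas.aestronglyMeasurable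
      (fun t _ => by simpa using norm_normalizedSum_le ha hC t) hz
  rw [laplace_sub hint ((integrableOn_cexp_neg_mul_Ioi hz).smul_const _),
    laplace_normalizedSum ha hC hz, hL _ (by simpa using hz), laplace, integral_smul_const,
    integral_cexp_neg_mul_Ioi hz, smul_eq_mul, add_sub_cancel_left]
  field_simp
  ring

lemma continuousOn_dslope_of_differentiableAt {G : ℂ → ℂ} {s : Set ℂ} {z : ℂ}
    (hG : ContinuousOn G s) (hz : DifferentiableAt ℂ G z) : ContinuousOn (dslope G z) s := by
  intro w hw
  rcases eq_or_ne w z with rfl | hne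
  · exact (continuousAt_dslope_same.2 hz).continuousWithinAt
  · exact (continuousWithinAt_dslope_of_ne hne).2 (hG w hw)

lemma tendsto_intervalIntegral_normalizedSum_sub (ha : ∀ n, 0 ≤ a n)
    (hC : ∀ n : ℕ, ∑ k ∈ Finset.Icc 1 n, a k ≤ C * n) {A : ℝ} {F : ℂ → ℂ}
    (hF : ContinuousOn F {s | 1 ≤ s.re}) (hF1 : DifferentiableAt ℂ F 1)
    (hL : ∀ s : ℂ, 1 < s.re → LSeries (fun n => a n) s = F s + A / (s - 1)) :
    Tendsto (fun T => ∫ t in 0..T, (normalizedSum a t - A)) atTop (𝓝 ((F 1).re - A)) := by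
  set G : ℂ → ℂ := fun z => (F (1 + z) - A) / (1 + z) with hG
  have hGcont : ContinuousOn G {z | 0 ≤ z.re} := by
    have hFcomp : ContinuousOn (fun z => F (1 + z)) {z | 0 ≤ z.re} :=
      hF.comp (by fun_prop) fun z hz => by simpa using hz
    exact (hFcomp.sub continuousOn_const).div (by fun_prop) fun z (hz : 0 ≤ z.re) =>
      Complex.ne_zero_of_re_pos (by simpa using by linarith)
  have hG0 : DifferentiableAt ℂ G 0 := by
    have hF1' : DifferentiableAt ℂ (fun z => F (1 + z)) 0 :=
      DifferentiableAt.fun_comp' 0 (by simpa using hF1) (by fun_prop)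
    exact (hF1'.sub_const _).div (by fun_prop) (by simp)
  have hNewman := tendsto_intervalIntegral_of_laplace (f := fun t => (normalizedSum a t : ℂ) - A)
    (M := (C + |A|).toNNReal)
    ((Complex.measurable_ofReal.comp (measurable_normalizedSum a)).sub_const _).aestronglyMeasurable
    (fun t _ => ?_) (continuousOn_dslope_of_differentiableAt hGcont hG0)
    fun z hz => laplace_normalizedSum_sub_const ha hC hL hz
  · have hre := (Complex.continuous_re.tendsto _).comp hNewman
    simpa [hG, Function.comp_def, ← Complex.ofReal_sub, intervalIntegral.integral_ofReal] using hre
  · refine (norm_sub_le _ _).trans (le_trans ?_ (le_coe_toNNReal _))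
    simpa using norm_normalizedSum_le ha hC t

theorem tendsto_sum_div_sub_mul_log_of_LSeries (ha : ∀ n, 0 ≤ a n)
    (hC : ∀ n : ℕ, ∑ k ∈ Finset.Icc 1 n, a k ≤ C * n) {A : ℝ} {F : ℂ → ℂ}
    (hF : ContinuousOn F {s | 1 ≤ s.re}) (hF1 : DifferentiableAt ℂ F 1)
    (hL : ∀ s : ℂ, 1 < s.re → LSeries (fun n => a n) s = F s + A / (s - 1)) :
    Tendsto (fun x : ℝ => ∑ n ∈ Finset.Icc 1 ⌊x⌋₊, a n / n - A * log x) atTop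
      (𝓝 (F 1).re) := by
  have hintegral := tendsto_intervalIntegral_normalizedSum_sub ha hC hF hF1 hL
  have hmono := (monotone_exp_mul_normalizedSum ha).monotoneOn (Ici 0)
  have hlim := tendsto_of_tendsto_intervalIntegral_sub hmono (fun t _ => normalizedSum_nonneg ha t)
    hintegral
  have hsum := (hlim.add hintegral).comp tendsto_log_atTop
  rw [add_sub_cancel] at hsum
  refine hsum.congr' ?_
  filter_upwards [eventually_ge_atTop 1] with x hx
  have hlog := log_nonneg hx
  have hcomp := sum_div_eq_normalizedSum_add_integral a hlog
  rw [exp_log (by linarith)] at hcomp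
  rw [Function.comp_apply, hcomp, intervalIntegral.integral_sub
    (intervalIntegrable_of_monotoneOn_exp_mul hmono le_rfl hlog) intervalIntegrable_const,
    intervalIntegral.integral_const, smul_eq_mul]
  ring

end DirichletSeries

section ArithmeticProgression

open DirichletCharacter ArithmeticFunction ArithmeticFunction.vonMangoldt

lemma sum_residueClass_le {q : ℕ} (a : ZMod q) (n : ℕ) :
    ∑ k ∈ Finset.Icc 1 n, residueClass a k ≤ (Real.log 4 + 4) * n :=
  calc ∑ k ∈ Finset.Icc 1 n, residueClass a k ≤ ∑ k ∈ Finset.Icc 1 n, vonMangoldt k :=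
        Finset.sum_le_sum fun k _ => residueClass_le a k
    _ = Chebyshev.psi n := by simp [Chebyshev.psi, ← Finset.Icc_add_one_left_eq_Ioc]
    _ ≤ (Real.log 4 + 4) * n := Chebyshev.psi_le_const_mul_self n.cast_nonneg

variable {q : ℕ} [NeZero q]

lemma differentiableAt_LFunctionResidueClassAux_one (a : ZMod q) :
    DifferentiableAt ℂ (LFunctionResidueClassAux a) 1 := by
  have hlogDeriv {f : ℂ → ℂ} (hf : Differentiable ℂ f) (h1 : f 1 ≠ 0) :
      DifferentiableAt ℂ (fun s => deriv f s / f s) 1 :=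
    (hf.analyticAt 1).deriv.differentiableAt.div hf.differentiableAt h1
  unfold LFunctionResidueClassAux
  simp only [neg_div, mul_div_assoc]
  refine ((hlogDeriv (differentiable_LFunctionTrivChar₁ q)
    (LFunctionTrivChar₁_apply_one_ne_zero q)).neg.sub
      (.fun_sum fun χ hχ => (hlogDeriv ?_ ?_).const_mul _)).const_mul _
  all_goals have hχ1 : χ ≠ 1 := by simpa using hχ
  exacts [differentiable_LFunction hχ1, LFunction_apply_one_ne_zero hχ1]

theorem tendsto_sum_residueClass_div_sub_log {a : ZMod q} (ha : IsUnit a) :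
    Tendsto (fun x : ℝ =>
      ∑ n ∈ Finset.Icc 1 ⌊x⌋₊, residueClass a n / n - (q.totient : ℝ)⁻¹ * Real.log x)
      atTop (𝓝 (LFunctionResidueClassAux a 1).re) :=
  tendsto_sum_div_sub_mul_log_of_LSeries (residueClass_nonneg a) (sum_residueClass_le a)
    (continuousOn_LFunctionResidueClassAux a) (differentiableAt_LFunctionResidueClassAux_one a)
    fun s hs => by simp [eqOn_LFunctionResidueClassAux ha hs]

lemma hasDerivAt_sub_one_mul_riemannZeta :
    HasDerivAt (Function.update (fun s => (s - 1) * riemannZeta s) 1 1)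
      (Real.eulerMascheroniConstant : ℂ) 1 := by
  rw [hasDerivAt_iff_tendsto_slope]
  refine tendsto_riemannZeta_sub_one_div.congr' ?_
  filter_upwards [self_mem_nhdsWithin] with s hs
  have hs' : s - 1 ≠ 0 := sub_ne_zero.2 hs
  rw [slope_def_field, Function.update_self, Function.update_of_ne hs]
  field_simp

lemma hasDerivAt_one_sub_cpow_neg_one {c : ℂ} (hc : c ≠ 0) :
    HasDerivAt (fun s : ℂ => 1 - c ^ (-s)) (c⁻¹ * Complex.log c) 1 := by
  refine (((hasDerivAt_neg (1 : ℂ)).const_cpow (.inl hc)).const_sub 1).congr_deriv ?_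
  rw [Complex.cpow_neg_one]
  ring

lemma logDeriv_one_sub_cpow_neg_one {c : ℂ} (hc : c ≠ 0) :
    logDeriv (fun s : ℂ => 1 - c ^ (-s)) 1 = Complex.log c / (c - 1) := by
  rw [logDeriv_apply, (hasDerivAt_one_sub_cpow_neg_one hc).deriv, Complex.cpow_neg_one,
    inv_mul_eq_div, div_div, mul_sub, mul_one, mul_inv_cancel₀ hc]

lemma LFunctionTrivChar₁_eq_mul (q : ℕ) [NeZero q] :
    LFunctionTrivChar₁ q = fun s => (∏ p ∈ q.primeFactors, (1 - (p : ℂ) ^ (-s))) *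
      Function.update (fun s => (s - 1) * riemannZeta s) 1 1 s := by
  ext s
  rcases eq_or_ne s 1 with rfl | hs
  · simp [Complex.cpow_neg_one]
  · simp only [Function.update_of_ne hs, LFunctionTrivChar_eq_mul_riemannZeta hs]
    ring

lemma logDeriv_LFunctionTrivChar₁_one (q : ℕ) [NeZero q] :
    logDeriv (LFunctionTrivChar₁ q) 1 =
      (Real.eulerMascheroniConstant + ∑ p ∈ q.primeFactors, Real.log p / (p - 1) : ℝ) := by
  have hp0 {p : ℕ} (hp : p ∈ q.primeFactors) : (p : ℂ) ≠ 0 :=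
    mod_cast (Nat.prime_of_mem_primeFactors hp).ne_zero
  have hfactor {p : ℕ} (hp : p ∈ q.primeFactors) : 1 - (p : ℂ) ^ (-1 : ℂ) ≠ 0 := by
    rw [Complex.cpow_neg_one, sub_ne_zero, ne_comm, inv_ne_one]
    exact_mod_cast (Nat.prime_of_mem_primeFactors hp).ne_one
  have hdiff {p : ℕ} (hp : p ∈ q.primeFactors) :=
    (hasDerivAt_one_sub_cpow_neg_one (hp0 hp)).differentiableAt
  have hprod : logDeriv (fun s : ℂ => ∏ p ∈ q.primeFactors, (1 - (p : ℂ) ^ (-s))) 1 =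
      ∑ p ∈ q.primeFactors, (Real.log p / (p - 1) : ℂ) := by
    rw [logDeriv_prod (fun p => hfactor) fun p => hdiff]
    exact Finset.sum_congr rfl fun p hp => by
      rw [logDeriv_one_sub_cpow_neg_one (hp0 hp), Complex.natCast_log]
  rw [LFunctionTrivChar₁_eq_mul,
    logDeriv_mul (f := fun s => ∏ p ∈ q.primeFactors, (1 - (p : ℂ) ^ (-s)))
      (g := Function.update (fun s => (s - 1) * riemannZeta s) 1 1) 1
      (Finset.prod_ne_zero_iff.2 fun p => hfactor) (by simp) (.fun_finsetProd fun p => hdiff)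
      hasDerivAt_sub_one_mul_riemannZeta.differentiableAt,
    hprod, logDeriv_apply (Function.update _ _ _), hasDerivAt_sub_one_mul_riemannZeta.deriv,
    Function.update_self, div_one, add_comm]
  push_cast
  rfl

open scoped Classical in
lemma sum_subgroup_dirichletCharacter_inv (H : Subgroup (ZMod q)ˣ) (χ : DirichletCharacter ℂ q) :
    ∑ u : H, χ ((u : (ZMod q)ˣ) : ZMod q)⁻¹ =
      if ∀ u ∈ H, χ (u : ZMod q) = 1 then (Nat.card H : ℂ) else 0 := by
  let ψ : H →* ℂ := ((χ : ZMod q →* ℂ).comp (Units.coeHom (ZMod q))).comp H.subtype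
  have hψ : ψ = 1 ↔ ∀ u ∈ H, χ (u : ZMod q) = 1 := by
    simp [ψ, MonoidHom.ext_iff]
  calc ∑ u : H, χ ((u : (ZMod q)ˣ) : ZMod q)⁻¹ = ∑ u : H, ψ u :=
        Fintype.sum_equiv (Equiv.inv H) _ _ fun u => by simp [ψ, ZMod.inv_coe_unit]
    _ = _ := by simp only [sum_hom_units, hψ, Nat.card_eq_fintype_card, Nat.cast_ite, Nat.cast_zero]

open scoped Classical in
lemma sum_subgroup_residueClass (H : Subgroup (ZMod q)ˣ) (n : ℕ) :
    ∑ u : H, residueClass ((u : (ZMod q)ˣ) : ZMod q) n =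
      if ∃ u ∈ H, (u : ZMod q) = n then vonMangoldt n else 0 := by
  simp only [residueClass, Set.indicator_apply, Set.mem_ofPred_eq]
  split_ifs with h
  · obtain ⟨v, hv, hvn⟩ := h
    rw [Fintype.sum_eq_single ⟨v, hv⟩ fun u hu => if_neg fun hn => hu ?_, if_pos hvn.symm]
    exact Subtype.ext (Units.ext (hn.symm.trans hvn.symm))
  · exact Finset.sum_eq_zero fun u _ => if_neg fun hn => h ⟨u, u.2, hn.symm⟩

open scoped Classical in
lemma sum_subgroup_sum_dirichletCharacter_inv_mul (H : Subgroup (ZMod q)ˣ)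
    (s : Finset (DirichletCharacter ℂ q)) (c : DirichletCharacter ℂ q → ℂ) :
    ∑ u : H, ∑ χ ∈ s, χ ((u : (ZMod q)ˣ) : ZMod q)⁻¹ * c χ =
      Nat.card H * ∑ χ ∈ s with ∀ u ∈ H, χ (u : ZMod q) = 1, c χ := by
  rw [Finset.sum_comm, Finset.mul_sum, Finset.sum_filter]
  refine Finset.sum_congr rfl fun χ _ => ?_
  rw [← Finset.sum_mul, sum_subgroup_dirichletCharacter_inv, ite_zero_mul]

open scoped Classical in
lemma sum_subgroup_LFunctionResidueClassAux_one (H : Subgroup (ZMod q)ˣ) :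
    ∑ u : H, LFunctionResidueClassAux ((u : (ZMod q)ˣ) : ZMod q) 1 =
      -((Nat.card H / q.totient : ℂ) *
        ((Real.eulerMascheroniConstant + ∑ p ∈ q.primeFactors, Real.log p / (p - 1) : ℝ) +
          ∑ᶠ χ ∈ {χ : DirichletCharacter ℂ q | χ ≠ 1 ∧ ∀ u ∈ H, χ (u : ZMod q) = 1},
            deriv (LFunction χ) 1 / LFunction χ 1)) := by
  rw [← logDeriv_LFunctionTrivChar₁_one]
  simp only [LFunctionResidueClassAux, mul_div_assoc, neg_div, ← Finset.mul_sum]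
  rw [Finset.sum_sub_distrib, sum_subgroup_sum_dirichletCharacter_inv_mul, Finset.sum_const,
    Finset.card_univ, nsmul_eq_mul, ← Nat.card_eq_fintype_card, logDeriv_apply,
    ← finsum_mem_coe_finset]
  simp only [Finset.coe_filter, Finset.mem_compl, Finset.mem_singleton, ne_eq]
  ring

open scoped Classical in
theorem statement6_general (q : ℕ) [NeZero q] (H : Subgroup (ZMod q)ˣ) :
    Tendsto (fun x : ℝ => Real.log x - H.index *
        ∑ n ∈ Finset.Icc 1 ⌊x⌋₊ with ∃ u ∈ H, (u : ZMod q) = (n : ℕ), vonMangoldt n / n)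
      atTop (𝓝 (Real.eulerMascheroniConstant +
        (∑ᶠ χ ∈ {χ : DirichletCharacter ℂ q | χ ≠ 1 ∧ ∀ u ∈ H, χ (u : ZMod q) = 1},
          deriv (LFunction χ) 1 / LFunction χ 1).re +
        ∑ p ∈ q.primeFactors, Real.log p / (p - 1))) := by
  have hindex : (H.index : ℝ) * (Nat.card H / q.totient) = 1 := by
    have hcard := H.index_mul_card
    rw [Nat.card_eq_fintype_card (α := (ZMod q)ˣ), ZMod.card_units_eq_totient] at hcard
    rw [← mul_div_assoc, div_eq_one_iff_eq (mod_cast (Nat.totient_pos.2 (NeZero.pos q)).ne')]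
    exact_mod_cast hcard
  have hsum := ((tendsto_finsetSum Finset.univ fun (u : H) _ =>
    tendsto_sum_residueClass_div_sub_log u.1.isUnit).const_mul (H.index : ℝ)).neg
  rw [← Complex.re_sum, sum_subgroup_LFunctionResidueClassAux_one] at hsum
  convert hsum using 2 with x
  · rw [Finset.sum_sub_distrib, Finset.sum_comm, Finset.sum_filter, Finset.sum_const,
      Finset.card_univ, ← Nat.card_eq_fintype_card, nsmul_eq_mul, mul_sub, ← mul_assoc, ← mul_assoc,
      mul_assoc (H.index : ℝ) (Nat.card H : ℝ), ← div_eq_mul_inv, hindex]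
    simp only [← Finset.sum_div, sum_subgroup_residueClass, ite_div, zero_div]
    ring
  · rw [← Complex.ofReal_natCast, ← Complex.ofReal_natCast, ← Complex.ofReal_div, Complex.neg_re,
      Complex.re_ofReal_mul, mul_neg, neg_neg, ← mul_assoc, hindex, Complex.add_re,
      Complex.ofReal_re]
    ring

end ArithmeticProgression

lemma exists_mem_rootsOfUnity_coe_eq_iff {M : Type*} [CommMonoid M] {m : ℕ} (hm : m ≠ 0) {a : M} :
    (∃ u ∈ rootsOfUnity m M, (u : M) = a) ↔ a ^ m = 1 := by
  refine ⟨fun ⟨u, hu, hua⟩ => hua ▸ (mem_rootsOfUnity' m u).1 hu, fun ha => ?_⟩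
  exact ⟨Units.ofPowEqOne a m ha hm, (mem_rootsOfUnity' m _).2 ha, rfl⟩

lemma index_rootsOfUnity_zmod {p m : ℕ} [Fact p.Prime] (hm : m ∣ p - 1) :
    (rootsOfUnity m (ZMod p)).index = (p - 1) / m := by
  rw [rootsOfUnity_eq_ker, IsCyclic.index_powMonoidHom_ker, Nat.card_eq_fintype_card,
    ZMod.card_units, Nat.gcd_eq_right hm]

lemma gammaK_eq (q : ℕ) [NeZero q] {m : ℕ} (hm : m ≠ 0) :
    gammaK q m = Real.eulerMascheroniConstant + (∑ᶠ χ ∈ {χ : DirichletCharacter ℂ q | χ ≠ 1 ∧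
      ∀ u ∈ rootsOfUnity m (ZMod q), χ (u : ZMod q) = 1},
        deriv (DirichletCharacter.LFunction χ) 1 / DirichletCharacter.LFunction χ 1).re := by
  have hLfun (χ : DirichletCharacter ℂ q) : Lfun χ = DirichletCharacter.LFunction χ := by
    ext s
    rw [Lfun, dif_neg (NeZero.ne q)]
  simp only [gammaK, hLfun, ← exists_mem_rootsOfUnity_coe_eq_iff hm, forall_exists_index, and_imp,
    forall_apply_eq_imp_iff₂]

/-- Let `q` be an odd prime and `m ∣ q−1`. Then
`lim_{x→∞} (log x − ((q−1)/m)·∑_{n ≤ x, n^m ≡ 1 (mod q)} Λ(n)/n)`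
exists and equals `γ_{K_m} + log q/(q−1)`. -/
theorem statement6 (q m : ℕ) (hq : q.Prime) (hq_odd : q ≠ 2) (hm : m ∣ q - 1) :
    Tendsto (fun x : ℝ => Real.log x -
        (((q : ℝ) - 1) / m) *
          ∑ n ∈ (Finset.Icc 1 ⌊x⌋₊).filter (fun n : ℕ => ((n : ZMod q)) ^ m = 1),
            ArithmeticFunction.vonMangoldt n / n)
      atTop (𝓝 (gammaK q m + Real.log q / ((q : ℝ) - 1))) := by
  have : Fact q.Prime := ⟨hq⟩
  have hm0 : m ≠ 0 := ne_zero_of_dvd_ne_zero (Nat.sub_pos_of_lt hq.one_lt).ne' hm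
  have hlim := statement6_general q (rootsOfUnity m (ZMod q))
  simp only [exists_mem_rootsOfUnity_coe_eq_iff hm0] at hlim
  rw [← gammaK_eq q hm0, index_rootsOfUnity_zmod hm, Nat.cast_div_charZero hm,
    Nat.cast_pred hq.pos, hq.primeFactors, Finset.sum_singleton] at hlim
  exact hlim
end

section
/- For every real x ≥ 3, ∑_{p prime, p > x} (log p)/(p²−1) < 1.053/x. -/
open Filter Topology

/-!
Write `Λ` for the von Mangoldt function. Since `∑_{m ∣ n} Λ(m) = log n`, the sum over all `m` of
`Λ(m) / m² * ∑_{n > N / m} 1 / n²` is `∑_{n > N} (log n) / n²`, which is known to high precision.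
Combining this identity at `N / k` for `k < 100` with weights `c / k`, where `c ≈ 10⁴ μ(k) / k`,
gives a sum `∑ Λ(m) / m² * V(N / m)` with `V(0) > 10⁴`, so that the terms `m > N` dominate
`10⁴ ∑_{n > N} Λ(n) / n²`. For `m ≤ N` the factor `y² V(y)`, `y = N / m`, is bounded below by a
small negative step function of `y`, whose contribution is a combination of values of Chebyshev's
`ψ`. An elementary bound `ψ(N) ≤ 16/9 log 2 · N` then yields `N ∑_{n > N} Λ(n) / n² ≤ 1.0514` for
`N ≥ 32768`, hence the bound for primes in this range. Below `32768` the primes are added one at a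
time, in decreasing order, in fixed-point arithmetic.

For the bound on `ψ`: `ψ(N) - ψ(N / 6)` is at most `log (N! / ((N/2)! (N/3)! (N/6)!))`, which the
multinomial theorem bounds by `(1/2 log 2 + 1/3 log 3 + 1/6 log 6) N` up to rounding.
-/

namespace PrimeTail

open ArithmeticFunction (vonMangoldt)

section Tail

/-- The tail `∑_{n > q} f n` of a series. -/
noncomputable def tail (f : ℕ → ℝ) (q : ℕ) : ℝ := ∑' n, f (n + (q + 1))

variable {f g G : ℕ → ℝ} {q : ℕ}

theorem tail_eq_add (hf : Summable f) (q : ℕ) : tail f q = f (q + 1) + tail f (q + 1) := by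
  rw [tail, ((summable_nat_add_iff (q + 1)).2 hf).tsum_eq_zero_add, zero_add, tail]
  simp only [add_assoc, add_comm 1]

theorem tail_eq_tsum_indicator (f : ℕ → ℝ) (q : ℕ) :
    tail f q = ∑' n, (Set.Ioi q).indicator f n := by
  rw [← (add_left_injective (q + 1)).tsum_eq fun n hn => ?_]
  · exact tsum_congr fun n => (Set.indicator_of_mem (Set.mem_Ioi.2 (by omega)) f).symm
  · have hqn : q < n := Set.mem_of_indicator_ne_zero hn
    exact ⟨n - (q + 1), Nat.sub_add_cancel hqn⟩

theorem hasSum_indicator_Ioi (hf : Summable f) (q : ℕ) :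
    HasSum ((Set.Ioi q).indicator f) (tail f q) :=
  tail_eq_tsum_indicator f q ▸ (hf.indicator _).hasSum

theorem tail_nonneg (hf : ∀ n, 0 ≤ f n) (q : ℕ) : 0 ≤ tail f q := tsum_nonneg fun _ => hf _

theorem tail_mono (hf : Summable f) (hg : Summable g) (h : ∀ n, q < n → f n ≤ g n) :
    tail f q ≤ tail g q :=
  ((summable_nat_add_iff (q + 1)).2 hf).tsum_le_tsum (fun _ => h _ (by omega))
    ((summable_nat_add_iff (q + 1)).2 hg)

theorem tendsto_sum_range_sub_succ (hG : Tendsto G atTop (𝓝 0)) (q : ℕ) :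
    Tendsto (fun k => ∑ i ∈ Finset.range k, (G (i + q) - G (i + q + 1))) atTop (𝓝 (G q)) := by
  have htelescope (k : ℕ) :
      ∑ i ∈ Finset.range k, (G (i + q) - G (i + q + 1)) = G q - G (k + q) := by
    simpa only [zero_add, add_right_comm _ 1] using Finset.sum_range_sub' (fun i => G (i + q)) k
  simpa only [htelescope, sub_zero] using ((tendsto_add_atTop_iff_nat q).2 hG).const_sub (G q)

theorem tail_le_of_le_sub (hf : Summable f) (hG : Tendsto G atTop (𝓝 0))
    (h : ∀ n, q ≤ n → f (n + 1) ≤ G n - G (n + 1)) : tail f q ≤ G q :=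
  le_of_tendsto_of_tendsto' ((summable_nat_add_iff (q + 1)).2 hf).hasSum.tendsto_sum_nat
    (tendsto_sum_range_sub_succ hG q) fun _ =>
      Finset.sum_le_sum fun i _ => h _ (Nat.le_add_left q i)

theorem le_tail_of_sub_le (hf : Summable f) (hG : Tendsto G atTop (𝓝 0))
    (h : ∀ n, q ≤ n → G n - G (n + 1) ≤ f (n + 1)) : G q ≤ tail f q :=
  le_of_tendsto_of_tendsto' (tendsto_sum_range_sub_succ hG q)
    ((summable_nat_add_iff (q + 1)).2 hf).hasSum.tendsto_sum_nat fun _ =>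
      Finset.sum_le_sum fun i _ => h _ (Nat.le_add_left q i)

theorem tsum_fiber_mul_indicator (f : ℕ × ℕ → ℝ) (q n : ℕ) :
    ∑' p : (fun p : ℕ × ℕ => p.1 * p.2) ⁻¹' {n}, {p | q < p.1 * p.2}.indicator f p =
      (Set.Ioi q).indicator (fun n => ∑ p ∈ n.divisorsAntidiagonal, f p) n := by
  by_cases hn : q < n
  · have hfiber : (fun p : ℕ × ℕ => p.1 * p.2) ⁻¹' {n} = ↑n.divisorsAntidiagonal := by
      ext p
      simp [Nat.ne_zero_of_lt hn]
    rw [hfiber, Finset.tsum_subtype', Set.indicator_of_mem (Set.mem_Ioi.2 hn)]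
    refine Finset.sum_congr rfl fun p hp => Set.indicator_of_mem ?_ f
    rwa [Set.mem_ofPred_eq, (Nat.mem_divisorsAntidiagonal.1 hp).1]
  · rw [Set.indicator_of_notMem (by simpa using hn), ← tsum_zero]
    refine tsum_congr fun p => Set.indicator_of_notMem ?_ f
    rwa [Set.mem_ofPred_eq, (show p.1.1 * p.1.2 = n from p.2)]

theorem hasSum_mul_tail_div (hf : Summable f) (hg : Summable g) (hf0 : f 0 = 0) (q : ℕ) :
    HasSum (fun m => f m * tail g (q / m))
      (tail (fun n => ∑ p ∈ n.divisorsAntidiagonal, f p.1 * g p.2) q) := by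
  set F := {p : ℕ × ℕ | q < p.1 * p.2}.indicator fun p => f p.1 * g p.2
  have hF : Summable F := (summable_mul_of_summable_norm hf.norm hg.norm).indicator _
  have htotal : ∑' p, F p = tail (fun n => ∑ p ∈ n.divisorsAntidiagonal, f p.1 * g p.2) q := by
    rw [tail_eq_tsum_indicator, ← (hF.hasSum.tsum_fiberwise fun p => p.1 * p.2).tsum_eq]
    exact tsum_congr fun n => tsum_fiber_mul_indicator _ q n
  have hrows := hF.hasSum.prod_fiberwise fun m => (hF.prod_factor m).hasSum
  rw [htotal] at hrows
  refine hrows.congr_fun fun m => ?_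
  rcases Nat.eq_zero_or_pos m with rfl | hm
  · simp [F, hf0]
  rw [tail_eq_tsum_indicator, ← tsum_mul_left]
  refine tsum_congr fun j => ?_
  simp only [F, Set.indicator_apply, Set.mem_Ioi, Set.mem_ofPred_eq, Nat.div_lt_iff_lt_mul hm,
    mul_comm j m, mul_ite, mul_zero]

end Tail

section Computation

/-- `k n`, arranged so that evaluating it in the kernel first reduces `n` to a literal. -/
def force {α : Type*} (n : ℕ) (k : ℕ → α) : α :=
  match n with
  | 0 => k 0
  | m + 1 => k (m + 1)

theorem force_eq {α : Type*} (n : ℕ) (k : ℕ → α) : force n k = k n := by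
  cases n <;> rfl

/-- The analogue of `force` for an integer argument. -/
def forceInt {α : Type*} (n : ℤ) (k : ℤ → α) : α :=
  match n with
  | .ofNat m => force m fun m => k (.ofNat m)
  | .negSucc m => force m fun m => k (.negSucc m)

theorem forceInt_eq {α : Type*} (n : ℤ) (k : ℤ → α) : forceInt n k = k n := by
  match n with
  | .ofNat m => exact force_eq m fun m => k (.ofNat m)
  | .negSucc m => exact force_eq m fun m => k (.negSucc m)

/-- The successive application of the partial maps `f n, …, f (n + 2 ^ k - 1)` to a state, as a
recursion of depth `k` only. -/
def runPow {α : Type*} (f : ℕ → α → Option α) : ℕ → ℕ → α → Option α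
  | 0, n, s => f n s
  | k + 1, n, s => (runPow f k n s).bind (force (n + 2 ^ k) (runPow f k))

variable {α : Type*} {f : ℕ → α → Option α} {I : ℕ → α → Prop} {P : ℕ → Prop} {b : ℕ}

theorem runPow_eq_some (hf : ∀ n s t, n < b → I n s → f n s = some t → P n ∧ I (n + 1) t)
    {k n : ℕ} {s t : α} (hb : n + 2 ^ k ≤ b) (hs : I n s) (ht : runPow f k n s = some t) :
    (∀ m, n ≤ m → m < n + 2 ^ k → P m) ∧ I (n + 2 ^ k) t := by
  induction k generalizing n s t with
  | zero =>
    obtain ⟨hP, hI⟩ := hf n s t hb hs ht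
    refine ⟨fun m hnm hmn => ?_, hI⟩
    rwa [le_antisymm (Nat.lt_succ_iff.1 hmn) hnm]
  | succ k ih =>
    rw [runPow, force_eq, Option.bind_eq_some_iff] at ht
    obtain ⟨u, hu, ht⟩ := ht
    rw [pow_succ, mul_two, ← add_assoc] at hb ⊢
    obtain ⟨hP₁, hI₁⟩ := ih ((Nat.le_add_right _ _).trans hb) hs hu
    obtain ⟨hP₂, hI₂⟩ := ih hb hI₁ ht
    refine ⟨fun m hnm hmn => ?_, hI₂⟩
    rcases lt_or_ge m (n + 2 ^ k) with hm | hm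
    exacts [hP₁ m hnm hm, hP₂ m hm hmn]

theorem forall_of_isSome_runPow {k : ℕ}
    (hf : ∀ n s t, n < 2 ^ k → I n s → f n s = some t → P n ∧ I (n + 1) t) {s : α} (hs : I 0 s)
    (h : (runPow f k 0 s).isSome) {n : ℕ} (hn : n < 2 ^ k) : P n := by
  obtain ⟨t, ht⟩ := Option.isSome_iff_exists.1 h
  exact (runPow_eq_some hf (by simp) hs ht).1 n n.zero_le (by simpa using hn)

end Computation

section SquareTail

theorem tendsto_one_div_add (c : ℝ) : Tendsto (fun n : ℕ => 1 / ((n : ℝ) + c)) atTop (𝓝 0) := by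
  simp_rw [one_div]
  exact tendsto_inv_atTop_zero.comp
    (tendsto_atTop_add_const_right _ _ tendsto_natCast_atTop_atTop)

/-- The tail `∑_{n > q} 1 / n²`. -/
noncomputable def sqTail (q : ℕ) : ℝ := tail (fun n => 1 / (n : ℝ) ^ 2) q

theorem summable_one_div_sq : Summable fun n : ℕ => 1 / (n : ℝ) ^ 2 :=
  Real.summable_one_div_nat_pow.2 one_lt_two

theorem sqTail_zero : sqTail 0 = Real.pi ^ 2 / 6 := by
  have h := hasSum_zeta_two.tsum_eq
  rw [hasSum_zeta_two.summable.tsum_eq_zero_add] at h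
  simpa [sqTail, tail] using h

theorem sqTail_eq_add (q : ℕ) : sqTail q = 1 / ((q : ℝ) + 1) ^ 2 + sqTail (q + 1) := by
  simpa only [sqTail, Nat.cast_add, Nat.cast_one] using tail_eq_add summable_one_div_sq q

theorem sqTail_le (q : ℕ) : sqTail q ≤ 1 / (q + 1 / 2) := by
  refine tail_le_of_le_sub (G := fun n => 1 / ((n : ℝ) + 1 / 2)) summable_one_div_sq
    (tendsto_one_div_add _) fun n _ => ?_
  push_cast
  rw [div_sub_div _ _ (by positivity) (by positivity),
    div_le_div_iff₀ (by positivity) (by positivity)]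
  nlinarith

theorem le_sqTail (q : ℕ) : 1 / (q + 1) + 1 / (2 * (q + 1) ^ 2) ≤ sqTail q := by
  refine le_tail_of_sub_le (G := fun n => 1 / ((n : ℝ) + 1) + 1 / (2 * ((n : ℝ) + 1) ^ 2))
    summable_one_div_sq ?_ fun n _ => ?_
  · have h := tendsto_one_div_add 1
    have hsum := h.add ((h.mul h).const_mul (1 / 2))
    simp only [mul_zero, add_zero] at hsum
    refine hsum.congr fun n => ?_
    field_simp
  · have hgap : 1 / ((n : ℝ) + 1) ^ 2 - (1 / ((n : ℝ) + 1) + 1 / (2 * ((n : ℝ) + 1) ^ 2)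
        - (1 / ((n : ℝ) + 1 + 1) + 1 / (2 * ((n : ℝ) + 1 + 1) ^ 2)))
        = 1 / (2 * ((n : ℝ) + 1) ^ 2 * ((n : ℝ) + 1 + 1) ^ 2) := by
      field_simp
      ring
    have hgap_pos : 0 < 1 / (2 * ((n : ℝ) + 1) ^ 2 * ((n : ℝ) + 1 + 1) ^ 2) := by positivity
    push_cast
    linarith

theorem sq_mul_sqTail_floor_le {z : ℝ} (hz : 40 ≤ z) : z ^ 2 * sqTail ⌊z⌋₊ ≤ z + 0.51 := by
  have hfloor := Nat.lt_floor_add_one z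
  calc z ^ 2 * sqTail ⌊z⌋₊ ≤ z ^ 2 * (1 / (z - 1 / 2)) := by
        gcongr
        exact (sqTail_le _).trans (one_div_le_one_div_of_le (by linarith) (by linarith))
    _ ≤ z + 0.51 := by
        rw [mul_one_div, div_le_iff₀ (by linarith)]
        nlinarith

theorem sub_le_sq_mul_sqTail_floor {z : ℝ} (hz : 0 < z) :
    z - 1 / 2 ≤ z ^ 2 * sqTail ⌊z⌋₊ := by
  have hfloor := Nat.floor_le hz.le
  calc z - 1 / 2 ≤ z ^ 2 * (1 / (z + 1) + 1 / (2 * (z + 1) ^ 2)) := by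
        rw [← sub_nonneg]
        have : z ^ 2 * (1 / (z + 1) + 1 / (2 * (z + 1) ^ 2)) - (z - 1 / 2) =
            1 / (2 * (z + 1) ^ 2) := by
          field_simp
          ring
        rw [this]
        positivity
    _ ≤ z ^ 2 * sqTail ⌊z⌋₊ := by
        refine le_trans ?_ (mul_le_mul_of_nonneg_left (le_sqTail _) (sq_nonneg z))
        gcongr

theorem abs_sq_mul_sqTail_floor_sub_le {z : ℝ} (hz : 40 ≤ z) :
    |z ^ 2 * sqTail ⌊z⌋₊ - z| ≤ 0.51 := by
  rw [abs_le]
  have hlower := sub_le_sq_mul_sqTail_floor (by linarith : 0 < z)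
  constructor <;> linarith [sq_mul_sqTail_floor_le hz]

end SquareTail

section LogTail

/-- Minus a primitive of `(log t) / t²`. -/
noncomputable def logPrim (t : ℝ) : ℝ := (Real.log t + 1) / t

/-- The tail `∑_{n > q} (log n) / n²`. -/
noncomputable def logTail (q : ℕ) : ℝ := tail (fun n => Real.log n / (n : ℝ) ^ 2) q

theorem summable_log_div_sq : Summable fun n : ℕ => Real.log n / (n : ℝ) ^ 2 := by
  have hlog : (fun n : ℕ => Real.log n) =O[atTop] fun n : ℕ => (n : ℝ) ^ (1 / 2 : ℝ) :=
    (isLittleO_log_rpow_atTop (by norm_num)).isBigO.comp_tendsto tendsto_natCast_atTop_atTop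
  refine summable_of_isBigO_nat (Real.summable_nat_rpow.2 (by norm_num : (-(3 / 2) : ℝ) < -1)) ?_
  refine (hlog.mul (Asymptotics.isBigO_refl (fun n : ℕ => ((n : ℝ) ^ 2)⁻¹) atTop)).congr'
    (by simp only [div_eq_mul_inv]; rfl) ?_
  filter_upwards [eventually_gt_atTop 0] with n hn
  have hn : (0 : ℝ) < n := by exact_mod_cast hn
  rw [← Real.rpow_natCast, ← Real.rpow_neg hn.le, ← Real.rpow_add hn]
  norm_num

theorem tendsto_logPrim : Tendsto (fun n : ℕ => logPrim n) atTop (𝓝 0) := by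
  have h := (Real.isLittleO_log_id_atTop.tendsto_div_nhds_zero.comp
    (tendsto_natCast_atTop_atTop (R := ℝ))).add (tendsto_one_div_add 0)
  rw [add_zero] at h
  exact h.congr fun n => by simp [logPrim, add_div]

theorem logPrim_sub_logPrim_le {a b : ℝ} (ha : 0 < a) (hb : 0 < b) :
    logPrim a - logPrim b ≤ Real.log b * (1 / a - 1 / b) := by
  have hlog := Real.log_le_sub_one_of_pos (div_pos ha hb)
  rw [Real.log_div ha.ne' hb.ne'] at hlog
  have hdiff : Real.log b * (1 / a - 1 / b) - (logPrim a - logPrim b) =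
      (a / b - 1 - (Real.log a - Real.log b)) / a := by
    rw [logPrim, logPrim]
    field_simp
    ring
  have := div_nonneg (sub_nonneg.2 hlog) ha.le
  linarith

theorem log_div_self_le {a b : ℝ} (ha : 3 ≤ a) (hab : a ≤ b) :
    Real.log b / b ≤ Real.log a / a := by
  have he : Real.exp 1 ≤ a := by linarith [Real.exp_one_lt_d9]
  exact Real.log_div_self_antitoneOn he (he.trans hab) hab

theorem logTail_le {q : ℕ} (hq : 3 ≤ q) : logTail q ≤ logPrim q := by
  refine tail_le_of_le_sub summable_log_div_sq tendsto_logPrim fun n hn => ?_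
  have hn3 : (3 : ℝ) ≤ n := by exact_mod_cast hq.trans hn
  have hn0 : (0 : ℝ) < n := by linarith
  have hprim := logPrim_sub_logPrim_le (a := n + 1) (b := n) (by positivity) hn0
  push_cast
  calc Real.log (n + 1) / ((n : ℝ) + 1) ^ 2 = Real.log (n + 1) / (n + 1) / (n + 1) := by
        rw [div_div, sq]
    _ ≤ Real.log n / n / (n + 1) := by
        gcongr ?_ / _
        exact log_div_self_le hn3 (lt_add_one _).le
    _ = -(Real.log n * (1 / (n + 1) - 1 / n)) := by
        field_simp
        ring
    _ ≤ logPrim n - logPrim (n + 1) := by linarith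

theorem le_logTail {q : ℕ} (hq : 2 ≤ q) : logPrim (q + 1) ≤ logTail q := by
  have hG : Tendsto (fun n : ℕ => logPrim ((n : ℝ) + 1)) atTop (𝓝 0) := by
    simpa only [Nat.cast_add, Nat.cast_one] using (tendsto_add_atTop_iff_nat 1).2 tendsto_logPrim
  refine le_tail_of_sub_le summable_log_div_sq hG fun n hn => ?_
  have hn2 : (2 : ℝ) ≤ n := by exact_mod_cast hq.trans hn
  push_cast
  obtain ⟨b, hb⟩ : ∃ b : ℝ, n + 1 = b := ⟨_, rfl⟩
  have hb3 : 3 ≤ b := by linarith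
  rw [hb]
  calc logPrim b - logPrim (b + 1) ≤ Real.log (b + 1) * (1 / b - 1 / (b + 1)) :=
        logPrim_sub_logPrim_le (by positivity) (by positivity)
    _ = Real.log (b + 1) / (b + 1) / b := by
        field_simp
        ring
    _ ≤ Real.log b / b / b := by
        gcongr ?_ / _
        exact log_div_self_le hb3 (lt_add_one b).le
    _ = Real.log b / b ^ 2 := by rw [div_div, sq]

theorem logTail_floor_sub_le {z : ℝ} (hz : 3 ≤ z) :
    logTail ⌊z⌋₊ - logPrim z ≤ Real.log z / (z * (z - 1)) := by
  have hq : 3 ≤ ⌊z⌋₊ := Nat.le_floor hz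
  have hq' : (3 : ℝ) ≤ ⌊z⌋₊ := by exact_mod_cast hq
  have hlog : 0 ≤ Real.log z := Real.log_nonneg (by linarith)
  have hfloor := Nat.lt_floor_add_one z
  calc logTail ⌊z⌋₊ - logPrim z ≤ logPrim ⌊z⌋₊ - logPrim z := by
        gcongr
        exact logTail_le hq
    _ ≤ Real.log z * (1 / ⌊z⌋₊ - 1 / z) := logPrim_sub_logPrim_le (by linarith) (by linarith)
    _ ≤ Real.log z * (1 / (z - 1) - 1 / z) := by
        gcongr <;> linarith
    _ = Real.log z / (z * (z - 1)) := by
        have : z - 1 ≠ 0 := by linarith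
        field_simp
        ring

theorem logPrim_sub_logTail_floor_le {z : ℝ} (hz : 3 ≤ z) :
    logPrim z - logTail ⌊z⌋₊ ≤ Real.log z / (z * (z - 1)) := by
  have hq : 2 ≤ ⌊z⌋₊ := Nat.le_floor (by push_cast; linarith)
  have hlog : 0 ≤ Real.log z := Real.log_nonneg (by linarith)
  have hfloor := Nat.lt_floor_add_one z
  have hfloor' := Nat.floor_le (by linarith : 0 ≤ z)
  set b : ℝ := ⌊z⌋₊ + 1
  calc logPrim z - logTail ⌊z⌋₊ ≤ logPrim z - logPrim b := by
        gcongr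
        exact le_logTail hq
    _ ≤ Real.log b * (1 / z - 1 / b) := logPrim_sub_logPrim_le (by linarith) (by linarith)
    _ = Real.log b / b * ((b - z) / z) := by
        have : b ≠ 0 := by linarith
        field_simp
    _ ≤ Real.log z / z * (1 / (z - 1)) := by
        have hstep : (b - z) / z ≤ 1 / (z - 1) := by
          gcongr <;> linarith
        exact mul_le_mul (log_div_self_le hz hfloor.le) hstep
          (div_nonneg (by linarith) (by linarith)) (by positivity)
    _ = Real.log z / (z * (z - 1)) := by rw [div_mul_div_comm, mul_one]

theorem abs_logTail_floor_sub_logPrim_le {z : ℝ} (hz : 3 ≤ z) :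
    |logTail ⌊z⌋₊ - logPrim z| ≤ Real.log z / (z * (z - 1)) :=
  abs_sub_le_iff.2 ⟨logTail_floor_sub_le hz, logPrim_sub_logTail_floor_le hz⟩

end LogTail

section VonMangoldtTail

/-- The tail `∑_{n > q} Λ(n) / n²`. -/
noncomputable def vonMangoldtTail (q : ℕ) : ℝ := tail (fun n => vonMangoldt n / (n : ℝ) ^ 2) q

theorem vonMangoldt_div_sq_nonneg (n : ℕ) : 0 ≤ vonMangoldt n / (n : ℝ) ^ 2 :=
  div_nonneg ArithmeticFunction.vonMangoldt_nonneg (sq_nonneg _)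

theorem summable_vonMangoldt_div_sq : Summable fun n : ℕ => vonMangoldt n / (n : ℝ) ^ 2 :=
  summable_log_div_sq.of_nonneg_of_le vonMangoldt_div_sq_nonneg
    fun _ => div_le_div_of_nonneg_right ArithmeticFunction.vonMangoldt_le_log (by positivity)

theorem sum_vonMangoldt_div_sq_mul_one_div_sq (n : ℕ) :
    ∑ p ∈ n.divisorsAntidiagonal, vonMangoldt p.1 / (p.1 : ℝ) ^ 2 * (1 / (p.2 : ℝ) ^ 2) =
      Real.log n / (n : ℝ) ^ 2 := by
  rw [← ArithmeticFunction.vonMangoldt_sum, ← Nat.sum_divisorsAntidiagonal fun d _ => vonMangoldt d,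
    Finset.sum_div]
  refine Finset.sum_congr rfl fun p hp => ?_
  rw [div_mul_div_comm, mul_one, ← mul_pow, ← Nat.cast_mul, (Nat.mem_divisorsAntidiagonal.1 hp).1]

theorem hasSum_vonMangoldt_mul_sqTail (q : ℕ) :
    HasSum (fun m : ℕ => vonMangoldt m / (m : ℝ) ^ 2 * sqTail (q / m)) (logTail q) := by
  have h := hasSum_mul_tail_div summable_vonMangoldt_div_sq summable_one_div_sq (by simp) q
  simpa only [sum_vonMangoldt_div_sq_mul_one_div_sq, sqTail, logTail] using h

end VonMangoldtTail

section Chebyshev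

theorem sum_vonMangoldt_mul_div (N : ℕ) :
    ∑ m ∈ Finset.Ioc 0 N, vonMangoldt m * ((N / m : ℕ) : ℝ) = Real.log N.factorial := by
  rw [← ArithmeticFunction.sum_Ioc_mul_zeta_eq_sum, ArithmeticFunction.vonMangoldt_mul_zeta]
  induction N with
  | zero => simp
  | succ N ih =>
    rw [Finset.sum_Ioc_succ_top N.zero_le, ih, Nat.factorial_succ, mul_comm (N + 1), Nat.cast_mul,
      Real.log_mul (by positivity) (by positivity), ArithmeticFunction.log_apply]

theorem sum_vonMangoldt_mul_div_div (N k : ℕ) :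
    ∑ m ∈ Finset.Ioc 0 N, vonMangoldt m * ((N / m / k : ℕ) : ℝ) =
      Real.log (N / k).factorial := by
  rw [← sum_vonMangoldt_mul_div]
  refine (Finset.sum_subset_zero_on_sdiff (Finset.Ioc_subset_Ioc_right (Nat.div_le_self N k))
    (fun m hm => ?_) fun m _ => ?_).symm
  · simp only [Finset.mem_sdiff, Finset.mem_Ioc, not_and, not_le] at hm
    rw [Nat.div_right_comm, Nat.div_eq_of_lt (hm.2 hm.1.1), Nat.cast_zero, mul_zero]
  · rw [Nat.div_right_comm]

theorem sum_vonMangoldt_mul_ite_le {j : ℕ} (hj : 0 < j) (N : ℕ) :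
    ∑ m ∈ Finset.Ioc 0 N, vonMangoldt m * (if j ≤ N / m then 1 else 0) =
      Chebyshev.psi (N / j : ℕ) := by
  rw [Chebyshev.psi, Nat.floor_natCast]
  simp only [mul_ite, mul_one, mul_zero]
  rw [← Finset.sum_filter]
  refine Finset.sum_congr (Finset.ext fun m => ?_) fun _ _ => rfl
  simp only [Finset.mem_filter, Finset.mem_Ioc]
  constructor
  · rintro ⟨⟨hm, -⟩, hjm⟩
    rw [Nat.le_div_iff_mul_le hm] at hjm
    exact ⟨hm, (Nat.le_div_iff_mul_le hj).2 (by linarith)⟩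
  · rintro ⟨hm, hmj⟩
    rw [Nat.le_div_iff_mul_le hj] at hmj
    exact ⟨⟨hm, by nlinarith⟩, (Nat.le_div_iff_mul_le hm).2 (by linarith)⟩

theorem psi_le_psi_div_six_add (N : ℕ) :
    Chebyshev.psi N ≤ Chebyshev.psi (N / 6 : ℕ) + (Real.log N.factorial -
      Real.log (N / 2).factorial - Real.log (N / 3).factorial - Real.log (N / 6).factorial) := by
  rw [← sum_vonMangoldt_mul_ite_le (by norm_num : 0 < 6), ← sum_vonMangoldt_mul_div,
    ← sum_vonMangoldt_mul_div_div N 2, ← sum_vonMangoldt_mul_div_div N 3,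
    ← sum_vonMangoldt_mul_div_div N 6, ← Finset.sum_sub_distrib,
    ← Finset.sum_sub_distrib, ← Finset.sum_sub_distrib, ← Finset.sum_add_distrib, Chebyshev.psi,
    Nat.floor_natCast]
  refine Finset.sum_le_sum fun m hm => ?_
  obtain ⟨hm, hmN⟩ := Finset.mem_Ioc.1 hm
  have hq : 1 ≤ N / m := (Nat.one_le_div_iff hm).2 hmN
  generalize N / m = q at hq ⊢
  have hcoeff : 1 + q / 2 + q / 3 + q / 6 ≤ (if 6 ≤ q then 1 else 0) + q := by
    split_ifs <;> omega
  have hcoeff' : (1 : ℝ) ≤ (if 6 ≤ q then 1 else 0) +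
      (q - (q / 2 : ℕ) - (q / 3 : ℕ) - (q / 6 : ℕ)) := by
    have : (1 : ℝ) + (q / 2 : ℕ) + (q / 3 : ℕ) + (q / 6 : ℕ) ≤ (if 6 ≤ q then 1 else 0) + q := by
      exact_mod_cast hcoeff
    linarith
  simpa only [mul_one, mul_add, mul_sub] using
    mul_le_mul_of_nonneg_left hcoeff' ArithmeticFunction.vonMangoldt_nonneg

theorem factorial_add_mul_pow_le {x y : ℝ} (hx : 0 ≤ x) (hy : 0 ≤ y) (m n : ℕ) :
    (m + n).factorial * (x ^ m * y ^ n) ≤ m.factorial * n.factorial * (x + y) ^ (m + n) := by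
  have hterm : x ^ m * y ^ n * (m + n).choose m ≤ (x + y) ^ (m + n) := by
    rw [add_pow]
    have := Finset.single_le_sum (f := fun k => x ^ k * y ^ (m + n - k) * (m + n).choose k)
      (fun _ _ => by positivity) (Finset.mem_range.2 (by omega : m < m + n + 1))
    simpa only [Nat.add_sub_cancel_left] using this
  have hchoose : ((m + n).factorial : ℝ) = (m + n).choose m * m.factorial * n.factorial := by
    rw [← Nat.add_choose_mul_factorial_mul_factorial m n, Nat.choose_symm_add]
    push_cast
    ring
  calc (m + n).factorial * (x ^ m * y ^ n)
      = m.factorial * n.factorial * (x ^ m * y ^ n * (m + n).choose m) := by rw [hchoose]; ring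
    _ ≤ m.factorial * n.factorial * (x + y) ^ (m + n) := by gcongr

theorem log_factorial_add_le {x y : ℝ} (hx : 0 < x) (hy : 0 < y) (m n : ℕ) :
    Real.log (m + n).factorial ≤ Real.log m.factorial + Real.log n.factorial +
      m * Real.log ((x + y) / x) + n * Real.log ((x + y) / y) := by
  have h := Real.log_le_log (by positivity) (factorial_add_mul_pow_le hx.le hy.le m n)
  rw [Real.log_mul (by positivity) (by positivity), Real.log_mul (by positivity) (by positivity),
    Real.log_mul (by positivity) (by positivity), Real.log_mul (by positivity) (by positivity),
    Real.log_pow, Real.log_pow, Real.log_pow] at h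
  rw [Real.log_div (by positivity) hx.ne', Real.log_div (by positivity) hy.ne']
  push_cast at h
  linarith

theorem log_factorial_le_of_le {m n : ℕ} (h : m ≤ n) :
    Real.log n.factorial ≤ Real.log m.factorial + (n - m : ℕ) * Real.log n := by
  rcases Nat.eq_zero_or_pos n with rfl | hn
  · simp [Nat.le_zero.1 h]
  rw [← Real.log_pow, ← Real.log_mul (by positivity) (by positivity)]
  refine Real.log_le_log (by positivity) ?_
  rw [← Nat.factorial_mul_descFactorial (Nat.sub_le n m), Nat.sub_sub_self h]
  exact_mod_cast Nat.mul_le_mul_left _ (Nat.descFactorial_le_pow n (n - m))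

theorem log_factorial_sub_le (N : ℕ) :
    Real.log N.factorial - Real.log (N / 2).factorial - Real.log (N / 3).factorial -
      Real.log (N / 6).factorial ≤
        (2 / 3 * Real.log 2 + 1 / 2 * Real.log 3) * N + 2 * Real.log N := by
  have hround : Real.log N.factorial ≤
      Real.log (N / 2 + (N / 3 + N / 6)).factorial + 2 * Real.log N := by
    refine (log_factorial_le_of_le (by omega : N / 2 + (N / 3 + N / 6) ≤ N)).trans ?_
    have hdefect : N - (N / 2 + (N / 3 + N / 6)) ≤ 2 := by omega
    gcongr
    exact_mod_cast hdefect
  have hsplit := log_factorial_add_le (x := 1 / 2) (y := 1 / 2) (by norm_num) (by norm_num)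
    (N / 2) (N / 3 + N / 6)
  have hsplit' := log_factorial_add_le (x := 1 / 3) (y := 1 / 6) (by norm_num) (by norm_num)
    (N / 3) (N / 6)
  norm_num at hsplit hsplit'
  have hlog_half : Real.log (3 / 2) = Real.log 3 - Real.log 2 :=
    Real.log_div (by norm_num) (by norm_num)
  have hlog2 : 0 ≤ Real.log 2 := Real.log_nonneg (by norm_num)
  have hlog3 : 0 ≤ Real.log 3 := Real.log_nonneg (by norm_num)
  have hdiv (k : ℕ) {c : ℝ} (hc : 0 ≤ c) : ((N / k : ℕ) : ℝ) * c ≤ N / k * c := by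
    gcongr
    exact Nat.cast_div_le
  have h2 := hdiv 2 hlog2
  have h3 := hdiv 3 hlog3
  have h6 := hdiv 6 (add_nonneg hlog2 hlog3)
  rw [hlog_half] at hsplit'
  push_cast at hsplit h2 h3 h6
  linarith

theorem log_three_le : Real.log 3 ≤ 65 / 41 * Real.log 2 := by
  have h := Real.log_le_log (by positivity) (by norm_num : (3 : ℝ) ^ 41 ≤ 2 ^ 65)
  rw [Real.log_pow, Real.log_pow] at h
  push_cast at h
  linarith

theorem psi_le_of_psi_div_six_le {N : ℕ} (hN : 1024 ≤ N)
    (h : Chebyshev.psi (N / 6 : ℕ) ≤ 16 / 9 * Real.log 2 * (N / 6 : ℕ)) :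
    Chebyshev.psi N ≤ 16 / 9 * Real.log 2 * N := by
  have hN' : (1024 : ℝ) ≤ N := by exact_mod_cast hN
  have : 0 < Real.log 2 := Real.log_pos one_lt_two
  have hlogN : Real.log N ≤ 10 * Real.log 2 / 1024 * N := by
    have hdiv := log_div_self_le (by norm_num) hN'
    rwa [show (1024 : ℝ) = 2 ^ 10 by norm_num, Real.log_pow, div_le_iff₀ (by linarith),
      show (2 : ℝ) ^ 10 = 1024 by norm_num, Nat.cast_ofNat] at hdiv
  have hsixth : Chebyshev.psi (N / 6 : ℕ) ≤ 16 / 9 * Real.log 2 * (N / 6) := by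
    refine h.trans ?_
    gcongr
    exact Nat.cast_div_le
  calc Chebyshev.psi N ≤ 16 / 9 * Real.log 2 * (N / 6) +
        ((2 / 3 * Real.log 2 + 1 / 2 * Real.log 3) * N + 2 * Real.log N) := by
        linarith [psi_le_psi_div_six_add N, log_factorial_sub_le N]
    _ ≤ 16 / 9 * Real.log 2 * (N / 6) + ((2 / 3 * Real.log 2 +
        1 / 2 * (65 / 41 * Real.log 2)) * N + 2 * (10 * Real.log 2 / 1024 * N)) := by
        gcongr
        exact log_three_le
    _ ≤ 16 / 9 * Real.log 2 * N := by
        have : 0 ≤ Real.log 2 * N := by positivity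
        linarith

theorem lcmUpto_succ (n : ℕ) : Nat.lcmUpto (n + 1) = Nat.lcm (n + 1) (Nat.lcmUpto n) := by
  rw [Nat.lcmUpto, ← Finset.insert_Icc_right_eq_Icc_add_one (by omega), Finset.lcm_insert]
  rfl

/-- One step of the verification of `lcm(1, …, n) ^ 9 ≤ 2 ^ (16 n)`, on the state
`l = lcm(1, …, n)`. -/
def lcmStep (n l : ℕ) : Option ℕ :=
  bif Nat.ble (l ^ 9) (2 ^ (16 * n)) then force (Nat.lcm (n + 1) l) some else none

theorem lcmUpto_pow_le {n : ℕ} (hn : n < 1024) : Nat.lcmUpto n ^ 9 ≤ 2 ^ (16 * n) := by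
  refine forall_of_isSome_runPow (P := fun n => Nat.lcmUpto n ^ 9 ≤ 2 ^ (16 * n))
    (I := fun n l => l = Nat.lcmUpto n) (k := 10) (fun m l t _ hl ht => ?_) rfl
    (by decide +kernel : (runPow lcmStep 10 0 1).isSome) hn
  rw [lcmStep, force_eq, Bool.cond_eq_ite, Option.ite_none_right_eq_some, Option.some_inj,
    Nat.ble_eq] at ht
  rw [← hl]
  exact ⟨ht.1, by rw [← ht.2, lcmUpto_succ, hl]⟩

theorem psi_le (N : ℕ) : Chebyshev.psi N ≤ 16 / 9 * Real.log 2 * N := by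
  induction N using Nat.strong_induction_on with
  | _ N ih =>
  rcases le_or_gt 1024 N with hN | hN
  · exact psi_le_of_psi_div_six_le hN (ih (N / 6) (by omega))
  · have hpow : (Nat.lcmUpto N : ℝ) ^ 9 ≤ 2 ^ (16 * N) := by exact_mod_cast lcmUpto_pow_le hN
    have hpos : (0 : ℝ) < Nat.lcmUpto N := by exact_mod_cast Nat.lcmUpto_pos N
    have hlog := Real.log_le_log (by positivity) hpow
    rw [Real.log_pow, Real.log_pow, ← Chebyshev.psi_eq_log_lcmUpto] at hlog
    push_cast at hlog
    linarith

end Chebyshev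

section WeightedSum

/-- The weighted sum `∑ c * g k` over the pairs `(k, c)` of a list. -/
noncomputable def wsum (l : List (ℕ × ℤ)) (g : ℕ → ℝ) : ℝ :=
  (l.map fun w => (w.2 : ℝ) * g w.1).sum

/-- The weighted sum `∑ c * g k` over the pairs `(k, c)` of a list with `p k`, in a form suited to
evaluation. -/
def condSum (p : ℕ → Bool) (g : ℕ → ℤ) : List (ℕ × ℤ) → ℤ
  | [] => 0
  | w :: l => bif p w.1 then w.2 * g w.1 + condSum p g l else condSum p g l

/-- The sum `∑ k * |c|` over the pairs `(k, c)` of a list. -/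
def moment (l : List (ℕ × ℤ)) : ℕ := (l.map fun w => w.1 * w.2.natAbs).sum

variable {l : List (ℕ × ℤ)} {f g : ℕ → ℝ}

theorem wsum_nil (g : ℕ → ℝ) : wsum [] g = 0 := rfl

theorem wsum_cons (w : ℕ × ℤ) (l : List (ℕ × ℤ)) (g : ℕ → ℝ) :
    wsum (w :: l) g = w.2 * g w.1 + wsum l g := by
  rw [wsum, List.map_cons, List.sum_cons, wsum]

theorem moment_cons (w : ℕ × ℤ) (l : List (ℕ × ℤ)) :
    moment (w :: l) = w.1 * w.2.natAbs + moment l := by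
  rw [moment, List.map_cons, List.sum_cons, moment]

theorem wsum_congr (h : ∀ w ∈ l, f w.1 = g w.1) : wsum l f = wsum l g :=
  congrArg List.sum (List.map_congr_left fun w hw => by rw [h w hw])

theorem cast_condSum (p : ℕ → Bool) (g : ℕ → ℤ) (l : List (ℕ × ℤ)) :
    (condSum p g l : ℝ) = wsum l fun k => if p k then (g k : ℝ) else 0 := by
  induction l with
  | nil => simp [condSum, wsum_nil]
  | cons w l ih =>
    rw [condSum, wsum_cons, ← ih, Bool.cond_eq_ite]
    split_ifs <;> push_cast <;> ring

theorem wsum_add (l : List (ℕ × ℤ)) (f g : ℕ → ℝ) :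
    wsum l (fun k => f k + g k) = wsum l f + wsum l g := by
  simp only [wsum, mul_add, List.sum_map_add]

theorem wsum_mul_right (l : List (ℕ × ℤ)) (f : ℕ → ℝ) (a : ℝ) :
    wsum l (fun k => f k * a) = wsum l f * a := by
  simp only [wsum, ← mul_assoc, List.sum_map_mul_right]

theorem wsum_mono (hl : ∀ w ∈ l, 0 ≤ w.2) (h : ∀ w ∈ l, f w.1 ≤ g w.1) :
    wsum l f ≤ wsum l g :=
  List.sum_le_sum fun w hw => mul_le_mul_of_nonneg_left (h w hw) (Int.cast_nonneg (hl w hw))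

theorem abs_wsum_sub_wsum_le {δ : ℝ}
    (h : ∀ w ∈ l, |f w.1 - g w.1| ≤ δ * w.1) : |wsum l f - wsum l g| ≤ δ * moment l := by
  induction l with
  | nil => simp [wsum_nil, moment]
  | cons w l ih =>
    obtain ⟨hw, hl⟩ := List.forall_mem_cons.1 h
    rw [wsum_cons, wsum_cons, moment_cons, add_sub_add_comm, ← mul_sub, Nat.cast_add,
      Nat.cast_mul, mul_add, ← mul_assoc, Nat.cast_natAbs, Int.cast_abs, mul_comm (δ * _)]
    exact (abs_add_le _ _).trans (add_le_add
      ((abs_mul _ _).trans_le (mul_le_mul_of_nonneg_left hw (abs_nonneg _))) (ih hl))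

theorem hasSum_wsum {F : ℕ → ℕ → ℝ} {a : ℕ → ℝ} (h : ∀ k, HasSum (fun m => F m k) (a k)) :
    HasSum (fun m => wsum l (F m)) (wsum l a) := by
  induction l with
  | nil => exact hasSum_zero
  | cons w l ih => simpa only [wsum_cons] using ((h w.1).mul_left (w.2 : ℝ)).add ih

theorem sum_vonMangoldt_mul_wsum_ite_le (hl : ∀ w ∈ l, 0 < w.1) (N : ℕ) :
    ∑ m ∈ Finset.Ioc 0 N, vonMangoldt m * wsum l (fun j => if j ≤ N / m then 1 else 0) =
      wsum l fun j => Chebyshev.psi (N / j : ℕ) := by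
  induction l with
  | nil => simp [wsum_nil]
  | cons w l ih =>
    obtain ⟨hw, hl⟩ := List.forall_mem_cons.1 hl
    simp only [wsum_cons, mul_add, Finset.sum_add_distrib, ih hl, mul_left_comm,
      ← Finset.mul_sum, sum_vonMangoldt_mul_ite_le hw]

theorem log_prod_zpow (hl : ∀ w ∈ l, 0 < w.1) :
    Real.log (l.map fun w => (w.1 : ℝ) ^ w.2).prod = wsum l fun k => Real.log k := by
  rw [Real.log_list_prod, List.map_map, wsum]
  · simp only [Function.comp_def, Real.log_zpow]
  · simp only [List.mem_map, forall_exists_index, and_imp, forall_apply_eq_imp_iff₂]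
    exact fun w hw => zpow_ne_zero _ (Nat.cast_ne_zero.2 (hl w hw).ne')

end WeightedSum

section Potential

/-- The weighted sum `∑ c * sqTail (q / k) / k` over the pairs `(k, c)` of a list. Up to the
factor `Λ(m) / m²` it is the contribution of `m` to `∑ c * logTail (N / k) / k` when
`q = N / m`. -/
noncomputable def potential (l : List (ℕ × ℤ)) (q : ℕ) : ℝ := wsum l fun k => sqTail (q / k) / k

variable {l : List (ℕ × ℤ)}

theorem potential_zero (l : List (ℕ × ℤ)) :
    potential l 0 = (wsum l fun k => 1 / (k : ℝ)) * (Real.pi ^ 2 / 6) := by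
  simp only [← wsum_mul_right, potential, Nat.zero_div, sqTail_zero, one_div_mul_eq_div]

theorem sqTail_div_eq_add {k : ℕ} (hk : 0 < k) (q : ℕ) :
    sqTail (q / k) / k =
      (if k ∣ q + 1 then (k : ℝ) else 0) * (1 / ((q : ℝ) + 1) ^ 2) + sqTail ((q + 1) / k) / k := by
  rw [Nat.succ_div]
  split_ifs with h
  · have hquot : ((q : ℝ) + 1) = k * ((q / k : ℕ) + 1) := by
      have := Nat.mul_div_cancel' h
      rw [Nat.succ_div_of_dvd h] at this
      exact_mod_cast this.symm
    have hk : (k : ℝ) ≠ 0 := Nat.cast_ne_zero.2 hk.ne'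
    rw [sqTail_eq_add, hquot]
    field_simp
  · rw [add_zero, zero_mul, zero_add]

theorem potential_eq_add (hl : ∀ w ∈ l, 0 < w.1) (q : ℕ) :
    potential l q = wsum l (fun k => if k ∣ q + 1 then (k : ℝ) else 0) * (1 / ((q : ℝ) + 1) ^ 2) +
      potential l (q + 1) := by
  rw [potential, potential, ← wsum_mul_right, ← wsum_add]
  exact wsum_congr fun w hw => sqTail_div_eq_add (hl w hw) q

theorem abs_sq_mul_potential_floor_sub_le {y : ℝ} (hl : ∀ w ∈ l, 0 < w.1 ∧ 40 * w.1 ≤ y) :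
    |y ^ 2 * potential l ⌊y⌋₊ - y * wsum l fun _ => 1| ≤ 0.51 * moment l := by
  rw [mul_comm, potential, mul_comm y, ← wsum_mul_right, ← wsum_mul_right]
  refine abs_wsum_sub_wsum_le fun w hw => ?_
  obtain ⟨hk, hky⟩ := hl w hw
  have hk : (0 : ℝ) < w.1 := Nat.cast_pos.2 hk
  have hscale : sqTail (⌊y⌋₊ / w.1) / w.1 * y ^ 2 - 1 * y =
      ((y / w.1) ^ 2 * sqTail ⌊y / w.1⌋₊ - y / w.1) * w.1 := by
    rw [Nat.floor_div_natCast]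
    field_simp
  rw [hscale, abs_mul, abs_of_pos hk]
  gcongr
  exact abs_sq_mul_sqTail_floor_sub_le ((le_div_iff₀ hk).2 hky)

theorem hasSum_vonMangoldt_mul_potential (l : List (ℕ × ℤ)) (N : ℕ) :
    HasSum (fun m : ℕ => vonMangoldt m / (m : ℝ) ^ 2 * potential l (N / m))
      (wsum l fun k => logTail (N / k) / k) := by
  simp only [potential, mul_comm (vonMangoldt _ / _), ← wsum_mul_right]
  refine hasSum_wsum fun k => ?_
  simpa only [Nat.div_div_eq_div_mul, mul_comm k, div_mul_eq_mul_div, mul_comm (sqTail _)] using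
    (hasSum_vonMangoldt_mul_sqTail (N / k)).div_const (k : ℝ)

end Potential

section Majorant

variable {l j : List (ℕ × ℤ)} {A B : ℝ} {N : ℕ}

theorem mul_indicator_sub_le_mul_potential (hA : A ≤ potential l 0)
    (hB : ∀ y : ℝ, 0 ≤ y → -(B * wsum j fun i => if i ≤ ⌊y⌋₊ then 1 else 0) ≤
      y ^ 2 * potential l ⌊y⌋₊) (hN : 0 < N) (m : ℕ) :
    A * (Set.Ioi N).indicator (fun m => vonMangoldt m / (m : ℝ) ^ 2) m -
      B / (N : ℝ) ^ 2 * (if m ∈ Finset.Ioc 0 N then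
        vonMangoldt m * wsum j (fun i => if i ≤ N / m then 1 else 0) else 0) ≤
      vonMangoldt m / (m : ℝ) ^ 2 * potential l (N / m) := by
  have : (0 : ℝ) < N := Nat.cast_pos.2 hN
  have hΛ : 0 ≤ vonMangoldt m := ArithmeticFunction.vonMangoldt_nonneg
  rcases Nat.eq_zero_or_pos m with rfl | hm
  · simp
  rcases lt_or_ge N m with hNm | hmN
  · rw [Set.indicator_of_mem (Set.mem_Ioi.2 hNm), if_neg (by simp [hNm]), mul_zero, sub_zero,
      Nat.div_eq_of_lt hNm, mul_comm]
    gcongr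
  · rw [Set.indicator_of_notMem (by simpa using hmN), if_pos (Finset.mem_Ioc.2 ⟨hm, hmN⟩),
      mul_zero, zero_sub]
    have : (0 : ℝ) < m := Nat.cast_pos.2 hm
    have h := mul_le_mul_of_nonneg_left (hB (N / m) (by positivity))
      (by positivity : 0 ≤ vonMangoldt m / (N : ℝ) ^ 2)
    rw [Nat.floor_div_eq_div] at h
    calc _ = vonMangoldt m / (N : ℝ) ^ 2 *
          -(B * wsum j fun i => if i ≤ N / m then 1 else 0) := by ring
      _ ≤ vonMangoldt m / (N : ℝ) ^ 2 * ((N / m : ℝ) ^ 2 * potential l (N / m)) := h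
      _ = _ := by field_simp

theorem mul_vonMangoldtTail_le_of_neg_le (hA : A ≤ potential l 0)
    (hB : ∀ y : ℝ, 0 ≤ y → -(B * wsum j fun i => if i ≤ ⌊y⌋₊ then 1 else 0) ≤
      y ^ 2 * potential l ⌊y⌋₊) (hj : ∀ w ∈ j, 0 < w.1) (hN : 0 < N) :
    A * vonMangoldtTail N ≤ (wsum l fun k => logTail (N / k) / k) +
      B / (N : ℝ) ^ 2 * wsum j fun i => Chebyshev.psi (N / i : ℕ) := by
  have hsteps := hasSum_sum_of_ne_finset_zero (L := .unconditional ℕ) (s := Finset.Ioc 0 N)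
    (f := fun m => if m ∈ Finset.Ioc 0 N then
      vonMangoldt m * wsum j (fun i => if i ≤ N / m then 1 else 0) else 0)
    fun m hm => if_neg hm
  rw [Finset.sum_congr rfl fun m hm => if_pos hm, sum_vonMangoldt_mul_wsum_ite_le hj] at hsteps
  rw [← sub_le_iff_le_add]
  exact hasSum_le (mul_indicator_sub_le_mul_potential hA hB hN)
    (((hasSum_indicator_Ioi summable_vonMangoldt_div_sq N).mul_left A).sub (hsteps.mul_left _))
    (hasSum_vonMangoldt_mul_potential l N)

theorem abs_mul_logTail_div_sub_le {k : ℕ} (hk : 0 < k) (hkN : 3 * k ≤ N) :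
    |N * (logTail (N / k) / k) - (Real.log N + 1 - Real.log k)| ≤
      Real.log N / (N - k) * k := by
  have hk' : (1 : ℝ) ≤ k := Nat.one_le_cast.2 hk
  have hkN : (3 * k : ℝ) ≤ N := by exact_mod_cast hkN
  have hN : (0 : ℝ) < N := by linarith
  have hz : (3 : ℝ) ≤ N / k := (le_div_iff₀ (by linarith)).2 hkN
  have hscale : N * (logTail (N / k) / k) - (Real.log N + 1 - Real.log k) =
      (N / k : ℝ) * (logTail ⌊(N / k : ℝ)⌋₊ - logPrim (N / k)) := by
    rw [Nat.floor_div_eq_div, logPrim, Real.log_div hN.ne' (by linarith)]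
    field_simp
    ring
  rw [hscale, abs_mul, abs_of_pos (by linarith)]
  have hNk : 0 < (N : ℝ) - k := by linarith
  calc (N / k : ℝ) * |logTail ⌊(N / k : ℝ)⌋₊ - logPrim (N / k)|
      ≤ (N / k : ℝ) * (Real.log (N / k) / (N / k * (N / k - 1))) := by
        gcongr
        exact abs_logTail_floor_sub_logPrim_le hz
    _ = Real.log (N / k) / (N - k) * k := by
        rw [div_sub_one (by linarith)]
        field_simp
    _ ≤ Real.log N / (N - k) * k := by
        gcongr
        exact div_le_self hN.le hk'

theorem abs_mul_wsum_logTail_sub_le {K : ℕ} (hl : ∀ w ∈ l, 0 < w.1 ∧ w.1 ≤ K)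
    (hK : 3 * K ≤ N) :
    |N * wsum l (fun k => logTail (N / k) / k) -
      wsum l (fun k => Real.log N + 1 - Real.log k)| ≤
        Real.log N / (N - K) * moment l := by
  rw [mul_comm (N : ℝ), ← wsum_mul_right]
  refine abs_wsum_sub_wsum_le fun w hw => ?_
  obtain ⟨hw, hwK⟩ := hl w hw
  have hwK' : (w.1 : ℝ) ≤ K := Nat.cast_le.2 hwK
  have hK' : (3 * K : ℝ) ≤ N := by exact_mod_cast hK
  have hw' : (0 : ℝ) < w.1 := Nat.cast_pos.2 hw
  rw [mul_comm]
  refine (abs_mul_logTail_div_sub_le hw (by omega)).trans ?_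
  have := Real.log_natCast_nonneg N
  gcongr
  linarith

end Majorant

section Weights

/-- The weights `(k, c)` with which `vonMangoldtTail N` is compared to the weighted sum
`∑ c * logTail (N / k) / k`. They approximate `c = 10 ^ 4 * μ(k) / k`, corrected by linear
programming for the truncation at `k < 100` so as to have sum zero. -/
def weights : List (ℕ × ℤ) :=
  [(1, 9999), (2, -4998), (3, -3332), (5, -1999), (6, 1666), (7, -1428), (10, 983), (11, -890),
    (13, -769), (14, 714), (15, 666), (16, -120), (17, -460), (19, -526), (20, 8), (21, 476),
    (22, 206), (23, -185), (26, 384), (27, -6), (28, -249), (29, -62), (30, -358), (31, -294),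
    (32, 59), (33, 296), (34, 229), (35, 137), (36, -83), (37, -31), (38, 144), (39, 143),
    (42, -227), (43, -161), (44, 104), (45, -67), (47, -48), (49, 33), (53, -39), (55, 86),
    (57, 75), (58, 46), (60, -16), (62, 142), (64, -1), (65, 7), (66, -92), (69, -44), (71, -2),
    (73, -62), (74, 6), (78, -35), (79, -39), (80, -1), (83, -57), (84, 74), (86, 76), (91, 18),
    (98, -47), (99, -49)]

/-- The jumps `(i, d)` of a step function whose multiple by `-100` bounds
`y ^ 2 * potential weights ⌊y⌋₊` from below. -/
def jumps : List (ℕ × ℤ) :=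
  [(19, 1), (29, 5), (42, 5), (43, 33), (71, 60), (73, 31), (200, 4), (241, 20), (661, 22),
    (773, 17), (863, 15), (1231, 19), (1879, 19), (4000, 1418)]

theorem moment_weights : moment weights = 327082 := by decide +kernel

theorem wsum_weights_one : wsum weights (fun _ => 1) = 0 := by
  simp only [weights, wsum_cons, wsum_nil]
  norm_num

theorem zpow_le_prod_weights :
    (2 : ℚ) ^ (-14496 : ℤ) ≤ (weights.map fun w => (w.1 : ℚ) ^ w.2).prod := by
  decide +kernel

theorem le_wsum_weights_log : -(14496 * Real.log 2) ≤ wsum weights fun k => Real.log k := by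
  have h : (2 : ℝ) ^ (-14496 : ℤ) ≤ (weights.map fun w => (w.1 : ℝ) ^ w.2).prod := by
    simpa [Function.comp_def] using (Rat.cast_le (K := ℝ)).2 zpow_le_prod_weights
  rw [← log_prod_zpow (by decide)]
  simpa only [Real.log_zpow, Int.cast_neg, Int.cast_ofNat, neg_mul] using
    Real.log_le_log (by positivity) h

theorem potential_weights_zero_gt :
    (1000087723594232247942508 : ℝ) < 10 ^ 20 * potential weights 0 := by
  have hweights :
      (6079.804314044324577621388791974799 : ℝ) < wsum weights fun k => 1 / (k : ℝ) := by
    simp only [weights, wsum_cons, wsum_nil]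
    norm_num
  have hpi : (3.14159265358979323846 : ℝ) ^ 2 / 6 < Real.pi ^ 2 / 6 := by
    gcongr
    exact Real.pi_gt_d20
  rw [potential_zero]
  have h := mul_lt_mul'' hweights hpi (by norm_num) (by norm_num)
  linarith

/-- The value at `q` of the step function with the jumps `jumps`. -/
def stepSum (q : ℕ) : ℤ := condSum (Nat.ble · q) 1 jumps

/-- One step of the verification of `-100 * stepSum q ≤ (q + 1) ^ 2 * potential weights q`, on a
lower bound `P` for `10 ^ 20 * potential weights q`. -/
def defectStep (q : ℕ) (P : ℤ) : Option ℤ :=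
  if 0 ≤ 10 ^ 22 * stepSum q + ((q + 1) ^ 2 : ℕ) * P then
    forceInt (P + -(10 ^ 20 * condSum (fun k => Nat.beq ((q + 1) % k) 0) Nat.cast weights) /
      ((q + 1) ^ 2 : ℕ)) some
  else none

theorem cast_stepSum (q : ℕ) : (stepSum q : ℝ) = wsum jumps fun i => if i ≤ q then 1 else 0 := by
  rw [stepSum, cast_condSum]
  simp only [Nat.ble_eq, Pi.one_apply, Int.cast_one]

theorem stepSum_nonneg (q : ℕ) : (0 : ℝ) ≤ stepSum q := by
  rw [cast_stepSum]
  refine List.sum_nonneg fun x hx => ?_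
  obtain ⟨w, hw, rfl⟩ := List.mem_map.1 hx
  have : 0 ≤ w.2 := (by decide : ∀ w ∈ jumps, 0 ≤ w.2) w hw
  positivity

theorem stepSum_of_le {q : ℕ} (hq : 4000 ≤ q) : stepSum q = 1669 := by
  have hble {i : ℕ} (hi : i ≤ 4000) : Nat.ble i q = true := Nat.ble_eq_true_of_le (hi.trans hq)
  simp [stepSum, jumps, condSum, hble]

theorem defectStep_spec {q : ℕ} {P P' : ℤ} (hP : (P : ℝ) ≤ 10 ^ 20 * potential weights q)
    (h : defectStep q P = some P') :
    -(100 * stepSum q : ℝ) ≤ (q + 1) ^ 2 * potential weights q ∧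
      (P' : ℝ) ≤ 10 ^ 20 * potential weights (q + 1) := by
  rw [defectStep, forceInt_eq, Option.ite_none_right_eq_some, Option.some_inj] at h
  obtain ⟨hcheck, rfl⟩ := h
  constructor
  · have hcheck : (0 : ℝ) ≤ 10 ^ 22 * stepSum q + (q + 1) ^ 2 * P := by exact_mod_cast hcheck
    have := mul_le_mul_of_nonneg_left hP (sq_nonneg ((q : ℝ) + 1))
    linarith
  · set c := condSum (fun k => Nat.beq ((q + 1) % k) 0) Nat.cast weights with hc
    have hpotential := potential_eq_add (l := weights) (by decide) q
    have hcast : (c : ℝ) = wsum weights fun k => if k ∣ q + 1 then (k : ℝ) else 0 := by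
      rw [hc, cast_condSum]
      simp only [Nat.beq_eq, Nat.dvd_iff_mod_eq_zero, Int.cast_natCast]
    have hdiv : ((-(10 ^ 20 * c) / ((q + 1) ^ 2 : ℕ) : ℤ) : ℝ) ≤
        -(10 ^ 20 * c) / ((q : ℝ) + 1) ^ 2 := by
      rw [le_div_iff₀ (by positivity)]
      have := Int.ediv_mul_le (-(10 ^ 20 * c)) (Nat.cast_ne_zero.2 (pow_ne_zero 2 q.succ_ne_zero))
      exact_mod_cast this
    rw [← hcast] at hpotential
    push_cast at hdiv ⊢
    rw [hpotential] at hP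
    have : -(10 ^ 20 * (c : ℝ)) / ((q : ℝ) + 1) ^ 2 =
      -(10 ^ 20 * (c * (1 / ((q : ℝ) + 1) ^ 2))) := by ring
    linarith

theorem neg_le_potential_weights {q : ℕ} (hq : q < 4096) :
    -(100 * stepSum q : ℝ) ≤ (q + 1) ^ 2 * potential weights q :=
  forall_of_isSome_runPow (P := fun q => -(100 * stepSum q : ℝ) ≤ (q + 1) ^ 2 * potential weights q)
    (I := fun q (P : ℤ) => (P : ℝ) ≤ 10 ^ 20 * potential weights q)
    (k := 12) (fun _ _ _ _ => defectStep_spec)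
    (by exact_mod_cast potential_weights_zero_gt.le)
    (by decide +kernel : (runPow defectStep 12 0 1000087723594232247942508).isSome) hq

theorem neg_le_sq_mul_potential_floor {y : ℝ} (hy : 0 ≤ y) :
    -(100 * stepSum ⌊y⌋₊ : ℝ) ≤ y ^ 2 * potential weights ⌊y⌋₊ := by
  rcases lt_or_ge y 4000 with hy4000 | hy4000
  · have hq : ⌊y⌋₊ < 4096 := (Nat.floor_lt hy).2 (by norm_num; linarith)
    rcases le_total 0 (potential weights ⌊y⌋₊) with hpos | hneg
    · exact (neg_nonpos.2 (mul_nonneg (by norm_num) (stepSum_nonneg _))).trans (by positivity)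
    · refine (neg_le_potential_weights hq).trans (mul_le_mul_of_nonpos_right ?_ hneg)
      gcongr
      exact (Nat.lt_floor_add_one y).le
  · have hl : ∀ w ∈ weights, 0 < w.1 ∧ 40 * (w.1 : ℝ) ≤ y := fun w hw => by
      obtain ⟨hw, hw'⟩ := (by decide : ∀ w ∈ weights, 0 < w.1 ∧ 40 * w.1 ≤ 4000) w hw
      exact ⟨hw, le_trans (by exact_mod_cast hw') hy4000⟩
    have h := abs_sq_mul_potential_floor_sub_le hl
    rw [wsum_weights_one, mul_zero, sub_zero, moment_weights, abs_le] at h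
    rw [stepSum_of_le (Nat.le_floor hy4000)]
    push_cast at h ⊢
    linarith [h.1]

end Weights

section MainBound

theorem wsum_jumps_psi_le (N : ℕ) :
    (wsum jumps fun i => Chebyshev.psi (N / i : ℕ)) ≤ 2.937 * (16 / 9 * Real.log 2 * N) := by
  have hrecip : (wsum jumps fun i => 1 / (i : ℝ)) ≤ 2.937 := by
    simp only [jumps, wsum_cons, wsum_nil]
    norm_num
  refine le_trans ?_ (mul_le_mul_of_nonneg_right hrecip (by positivity))
  rw [← wsum_mul_right]
  refine wsum_mono (by decide) fun w _ => (psi_le _).trans ?_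
  rw [one_div_mul_eq_div, mul_div_assoc]
  gcongr
  exact Nat.cast_div_le

theorem log_div_sub_le {N : ℕ} (hN : 32768 ≤ N) :
    Real.log N / (N - 100) ≤ 15 * Real.log 2 / 32668 := by
  have hN : (32768 : ℝ) ≤ N := by exact_mod_cast hN
  have hlog := log_div_self_le (by norm_num) hN
  rw [show (32768 : ℝ) = 2 ^ 15 by norm_num, Real.log_pow, div_le_iff₀ (by linarith)] at hlog
  rw [div_le_iff₀ (by linarith)]
  push_cast at hlog
  have : 0 < Real.log 2 := Real.log_pos one_lt_two
  nlinarith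

theorem mul_wsum_weights_logTail_le {N : ℕ} (hN : 32768 ≤ N) :
    N * wsum weights (fun k => logTail (N / k) / k) ≤
      14496 * Real.log 2 + 15 * Real.log 2 / 32668 * 327082 := by
  have h := abs_le.1 (abs_mul_wsum_logTail_sub_le (l := weights) (K := 100) (by decide)
    (by omega : 3 * 100 ≤ N))
  have hmain : wsum weights (fun k => Real.log N + 1 - Real.log k) =
      -wsum weights fun k => Real.log k := by
    have := wsum_add weights (fun k => Real.log N + 1 - Real.log k) fun k => Real.log k
    have hone := wsum_mul_right weights (fun _ => 1) (Real.log N + 1)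
    simp only [sub_add_cancel, one_mul, wsum_weights_one, zero_mul] at this hone
    linarith
  rw [hmain, moment_weights] at h
  have herror := log_div_sub_le hN
  push_cast at h
  linarith [h.2, le_wsum_weights_log]

theorem mul_vonMangoldtTail_le {N : ℕ} (hN : 32768 ≤ N) : N * vonMangoldtTail N ≤ 1.0514 := by
  have hN0 : (0 : ℝ) < N := by exact_mod_cast (by omega : 0 < N)
  have hmajorant := mul_vonMangoldtTail_le_of_neg_le (A := 10000) (B := 100) (l := weights)
    (by linarith [potential_weights_zero_gt])
    (fun y hy => cast_stepSum _ ▸ neg_le_sq_mul_potential_floor hy) (j := jumps) (by decide)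
    (by omega : 0 < N)
  have hscaled := mul_le_mul_of_nonneg_left hmajorant hN0.le
  have hpsi : N * (100 / (N : ℝ) ^ 2 * wsum jumps fun i => Chebyshev.psi (N / i : ℕ)) ≤
      100 * (2.937 * (16 / 9 * Real.log 2)) := by
    calc _ ≤ N * (100 / (N : ℝ) ^ 2 * (2.937 * (16 / 9 * Real.log 2 * N))) := by
          gcongr
          exact wsum_jumps_psi_le N
      _ = 100 * (2.937 * (16 / 9 * Real.log 2)) := by field_simp
  linarith [mul_wsum_weights_logTail_le hN, Real.log_two_lt_d9]

end MainBound

section PrimeTail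

/-- The summand `log n / (n ^ 2 - 1)`, restricted to primes. -/
noncomputable def primeTerm (n : ℕ) : ℝ :=
  if n.Prime then Real.log n / ((n : ℝ) ^ 2 - 1) else 0

/-- The tail `∑_{p > q} log p / (p ^ 2 - 1)` over primes. -/
noncomputable def primeTail (q : ℕ) : ℝ := tail primeTerm q

theorem primeTerm_nonneg (n : ℕ) : 0 ≤ primeTerm n := by
  rw [primeTerm]
  split_ifs with h
  · have hn : (1 : ℝ) ≤ n := by exact_mod_cast h.one_lt.le
    exact div_nonneg (Real.log_natCast_nonneg n) (by nlinarith)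
  · exact le_rfl

theorem primeTerm_le {q n : ℕ} (hq : 0 < q) (hn : q < n) :
    primeTerm n ≤ (1 + 1 / (q : ℝ)) * (vonMangoldt n / (n : ℝ) ^ 2) := by
  have hq : (1 : ℝ) ≤ q := by exact_mod_cast hq
  have hn : (q : ℝ) + 1 ≤ n := by exact_mod_cast hn
  have hΛ : 0 ≤ vonMangoldt n := ArithmeticFunction.vonMangoldt_nonneg
  rw [primeTerm]
  split_ifs with h
  · have hsq : 1 / ((n : ℝ) ^ 2 - 1) ≤ (1 + 1 / (q : ℝ)) / (n : ℝ) ^ 2 := by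
      rw [div_le_div_iff₀ (by nlinarith) (by nlinarith), one_add_div (by linarith),
        div_mul_eq_mul_div, le_div_iff₀ (by linarith)]
      nlinarith
    rw [← ArithmeticFunction.vonMangoldt_apply_prime h, div_eq_mul_one_div]
    exact (mul_le_mul_of_nonneg_left hsq hΛ).trans_eq (by ring)
  · positivity

theorem summable_primeTerm : Summable primeTerm := by
  refine (summable_nat_add_iff 2).1 <|
    ((summable_nat_add_iff 2).2 (summable_vonMangoldt_div_sq.mul_left (1 + 1 / ((1 : ℕ) : ℝ)))
      ).of_nonneg_of_le (fun _ => primeTerm_nonneg _) fun n => primeTerm_le one_pos (by omega)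

theorem primeTail_le {q : ℕ} (hq : 0 < q) :
    primeTail q ≤ (1 + 1 / (q : ℝ)) * vonMangoldtTail q :=
  (tail_mono summable_primeTerm (summable_vonMangoldt_div_sq.mul_left _)
    fun _ hn => primeTerm_le hq hn).trans_eq tsum_mul_left

theorem mul_primeTail_le {q : ℕ} (hq : 32768 ≤ q) : q * primeTail q ≤ 1.0515 := by
  have hq' : (32768 : ℝ) ≤ q := by exact_mod_cast hq
  have hinv : 1 / (q : ℝ) ≤ 1 / 32768 := one_div_le_one_div_of_le (by norm_num) hq'
  calc q * primeTail q ≤ q * ((1 + 1 / (q : ℝ)) * vonMangoldtTail q) := by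
        gcongr
        exact primeTail_le (by omega)
    _ = (1 + 1 / (q : ℝ)) * (q * vonMangoldtTail q) := by ring
    _ ≤ (1 + 1 / 32768) * 1.0514 := by
        refine mul_le_mul (by gcongr) (mul_vonMangoldtTail_le hq) ?_ (by norm_num)
        exact mul_nonneg q.cast_nonneg (tail_nonneg vonMangoldt_div_sq_nonneg q)
    _ ≤ 1.0515 := by norm_num

theorem primeTail_eq_add (q : ℕ) : primeTail q = primeTerm (q + 1) + primeTail (q + 1) :=
  tail_eq_add summable_primeTerm q

theorem tsum_primes_eq_primeTail {x : ℝ} (hx : 0 ≤ x) :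
    (∑' p : Nat.Primes, if x < (p : ℕ) then Real.log p / ((p : ℝ) ^ 2 - 1) else 0) =
      primeTail ⌊x⌋₊ := by
  rw [primeTail, tail_eq_tsum_indicator,
    ← tsum_subtype_eq_of_support_subset (s := {p : ℕ | p.Prime})]
  · refine tsum_congr fun p => ?_
    rw [Set.indicator_apply, primeTerm, if_pos p.2]
    simp only [Set.mem_Ioi, Nat.floor_lt hx]
  · refine fun n hn => of_not_not fun h => hn ?_
    exact Set.indicator_apply_eq_zero.2 fun _ => if_neg h

end PrimeTail

section Descent

theorem log_le_log_succ_sub {n : ℕ} (hn : 0 < n) :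
    Real.log n ≤ Real.log (n + 1 : ℕ) - 2 / (2 * n + 1) := by
  have hn : (0 : ℝ) < n := Nat.cast_pos.2 hn
  have h := le_hasSum (Real.hasSum_log_one_add_inv hn) 0 fun k _ => by positivity
  rw [← one_div, one_add_div hn.ne', Real.log_div (by positivity) hn.ne'] at h
  norm_num at h
  rw [Nat.cast_succ, div_eq_mul_inv]
  linarith

/-- A test that every prime passes, and of the composite numbers below `32768` none: those have
a prime factor at most `181`. The smaller factorials dismiss most `n` cheaply. -/
def maybePrime (n : ℕ) : Bool :=
  [3, 13, 181].all fun k => Nat.ble n k || Nat.beq (Nat.gcd n k.factorial) 1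

theorem maybePrime_of_prime {n : ℕ} (h : n.Prime) : maybePrime n = true := by
  refine List.all_eq_true.2 fun k _ => Bool.or_eq_true_iff.2 ?_
  rcases le_or_gt n k with hk | hk
  · exact .inl (Nat.ble_eq_true_of_le hk)
  · exact .inr (Nat.beq_eq ▸ h.coprime_iff_not_dvd.2 (h.dvd_factorial.not.2 hk.not_ge))

/-- One step `n + 1 ↦ n` of the verification of `(n + 2) * primeTail (n + 1) < 1.053`, on upper
bounds `(L, S)` for `10 ^ 20 * log (n + 1)` and `10 ^ 20 * primeTail (n + 1)`. -/
def tailStep (n : ℕ) (s : ℕ × ℕ) : Option (ℕ × ℕ) :=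
  bif Nat.blt (1000 * ((n + 2) * s.2)) (1053 * 10 ^ 20) then
    force (s.1 - 2 * 10 ^ 20 / (2 * n + 1)) fun L =>
    force (bif maybePrime (n + 1) then s.2 + (s.1 / (n * (n + 2)) + 1) else s.2) fun S =>
      some (L, S)
  else none

/-- The state `s` consists of upper bounds for `10 ^ 20 * log n` and `10 ^ 20 * primeTail n`. -/
def IsTailBound (n : ℕ) (s : ℕ × ℕ) : Prop :=
  10 ^ 20 * Real.log n ≤ s.1 ∧ 10 ^ 20 * primeTail n ≤ s.2

theorem mul_log_le_sub_div {n L : ℕ} (hn : 0 < n) (hL : 10 ^ 20 * Real.log (n + 1 : ℕ) ≤ L) :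
    10 ^ 20 * Real.log n ≤ (L - 2 * 10 ^ 20 / (2 * n + 1) : ℕ) := by
  have hdiv : ((2 * 10 ^ 20 / (2 * n + 1) : ℕ) : ℝ) ≤ 10 ^ 20 * (2 / (2 * (n : ℝ) + 1)) :=
    Nat.cast_div_le.trans_eq (by push_cast; ring)
  have hsub : (L : ℝ) ≤ (L - 2 * 10 ^ 20 / (2 * n + 1) : ℕ) + (2 * 10 ^ 20 / (2 * n + 1) : ℕ) := by
    exact_mod_cast Nat.sub_le_iff_le_add.1 le_rfl
  linarith [log_le_log_succ_sub hn]

theorem primeTerm_succ_le {n L : ℕ} (hn : 0 < n) (hL : 10 ^ 20 * Real.log (n + 1 : ℕ) ≤ L) :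
    10 ^ 20 * primeTerm (n + 1) ≤ (L / (n * (n + 2)) + 1 : ℕ) := by
  rw [primeTerm]
  split_ifs
  · have hlt : (L : ℝ) ≤ (n * (n + 2) : ℕ) * (L / (n * (n + 2)) + 1 : ℕ) := by
      exact_mod_cast (Nat.lt_mul_div_succ L (by positivity)).le
    have hsq : ((n + 1 : ℕ) : ℝ) ^ 2 - 1 = (n * (n + 2) : ℕ) := by
      push_cast
      ring
    rw [hsq, ← mul_div_assoc, div_le_iff₀' (by positivity)]
    exact hL.trans hlt
  · rw [mul_zero]
    positivity

theorem IsTailBound.of_tailStep {n : ℕ} {s t : ℕ × ℕ} (hn : 0 < n) (hs : IsTailBound (n + 1) s)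
    (h : tailStep n s = some t) :
    (n + 2) * primeTail (n + 1) < 1.053 ∧ IsTailBound n t := by
  obtain ⟨hL, hS⟩ := hs
  rw [tailStep, force_eq, force_eq, Bool.cond_eq_ite, Option.ite_none_right_eq_some,
    Option.some_inj] at h
  obtain ⟨hcheck, rfl⟩ := h
  refine ⟨?_, mul_log_le_sub_div hn hL, ?_⟩
  · have hcheck : 1000 * (((n : ℝ) + 2) * s.2) < 1053 * 10 ^ 20 := by
      exact_mod_cast Nat.blt_eq ▸ hcheck
    have := mul_le_mul_of_nonneg_left hS (by positivity : (0 : ℝ) ≤ n + 2)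
    linarith
  · rw [primeTail_eq_add, mul_add]
    cases hprime : maybePrime (n + 1)
    · have hcomposite : ¬ (n + 1).Prime := fun h =>
        Bool.false_ne_true (hprime ▸ maybePrime_of_prime h)
      rwa [primeTerm, if_neg hcomposite, mul_zero, zero_add]
    · rw [cond_true, add_comm, Nat.cast_add]
      exact add_le_add hS (primeTerm_succ_le hn hL)

theorem isTailBound_start : IsTailBound 32769 (1039723822957812500000, 3208923339843750) := by
  constructor
  · have hlog : Real.log (32769 : ℕ) ≤ 15 * Real.log 2 + 1 / 32768 := by
      have := Real.log_le_sub_one_of_pos (by norm_num : (0 : ℝ) < 32769 / 2 ^ 15)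
      rw [Real.log_div (by norm_num) (by norm_num), Real.log_pow] at this
      norm_num at this ⊢
      linarith
    push_cast at hlog ⊢
    linarith [Real.log_two_lt_d9]
  · have := mul_primeTail_le (by norm_num : 32768 ≤ 32769)
    push_cast at this ⊢
    linarith

theorem succ_mul_primeTail_lt {m : ℕ} (hm : 2 ≤ m) : (m + 1) * primeTail m < 1.053 := by
  rcases le_or_gt 32768 m with hmN | hmN
  · have hbound := mul_primeTail_le hmN
    have hmN : (32768 : ℝ) ≤ m := by exact_mod_cast hmN
    nlinarith
  have hdescent := forall_of_isSome_runPow (f := fun i => tailStep (32768 - i))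
    (I := fun i => IsTailBound (32768 - i + 1)) (k := 15)
    (P := fun i => ((32768 - i : ℕ) + 2) * primeTail (32768 - i + 1) < 1.053)
    (fun i s t hi hs h => by
      obtain ⟨hP, ht⟩ := hs.of_tailStep (by omega) h
      exact ⟨hP, by rwa [show 32768 - (i + 1) + 1 = 32768 - i by omega]⟩)
    isTailBound_start (by decide +kernel) (n := 32769 - m) (by omega)
  rw [show 32768 - (32769 - m) = m - 1 by omega, Nat.sub_add_cancel (by omega),
    Nat.cast_pred (by omega)] at hdescent
  linarith

end Descent

end PrimeTail

theorem statement17_general (x : ℝ) (hx : 2 ≤ x) :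
    (∑' p : Nat.Primes, if x < (p : ℕ) then Real.log p / ((p : ℝ) ^ 2 - 1) else 0) <
      1.053 / x := by
  have hx0 : 0 < x := by linarith
  rw [PrimeTail.tsum_primes_eq_primeTail hx0.le, lt_div_iff₀' hx0]
  calc x * PrimeTail.primeTail ⌊x⌋₊ ≤ (⌊x⌋₊ + 1) * PrimeTail.primeTail ⌊x⌋₊ := by
        gcongr
        · exact PrimeTail.tail_nonneg PrimeTail.primeTerm_nonneg _
        · exact (Nat.lt_floor_add_one x).le
    _ < 1.053 := PrimeTail.succ_mul_primeTail_lt (Nat.le_floor hx)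

/-- For every real `x ≥ 3`, `∑_{p > x} (log p)/(p²−1) < 1.053/x`. -/
theorem statement17 (x : ℝ) (hx : 3 ≤ x) :
    (∑' p : Nat.Primes, if x < (p : ℕ) then Real.log p / ((p : ℝ) ^ 2 - 1) else 0) <
      1.053 / x :=
  statement17_general x (by linarith)
end
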